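/- arXiv:cs/0304041 — 2 statements merged into one kernel-verified Lean document; each statement's English description precedes it below -/
import Mathlib

section
/- (Razborov) There exist constants ε > 0 and c > 0 such that for every n ≥ 1 and every m ≥ n+1, every Resolution refutation of the weak functional pigeonhole principle CNF ¬FWPHP^m_n has length at least c · 2^{n^ε}. -/
/-!
The proof is a polynomial version of Razborov's pseudo-width argument. Let `M` be the set of
pigeons whose pigeon clause is used by a refutation of size `L`, so `|M| ≤ L`; all other pigeons
are left unassigned. For a clause `C` and a pigeon `i`, let `S C i` be the set of holes to which
`i` may be sent without satisfying `C` (`openHoles`).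

*Thresholds.* `exists_thresholds` picks, by averaging over independent truncated geometric
variables, levels `r i` such that every clause of the refutation either has at least `w₀`
pigeons with `|S C i| ≤ 2w · r i`, or has at most `w` *heavy* pigeons, i.e. pigeons
with `|S C i| ≤ 2w · (r i + 1)`.

*The polynomial.* Consider the polynomials in variables indexed by `M` whose degree in variable
`i` is less than `ℓ i = w (2 r i + 1)`. A clause of the first kind imposes only a `2 ^ (-s)`
fraction of `∏ ℓ i` linear conditions if the polynomial is to vanish at all `x` that send the
`w₀` pigeons to holes in `S C i`. So if `L < 2 ^ s`, a nonzero `F` satisfies the conditions of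
all clauses of the first kind at once (`exists_vanishing`, `grid_card_mul_le`).

*Propagation.* By induction along the refutation, `F` vanishes at each `x` that is injective on
the heavy pigeons of `C` and sends every heavy pigeon `i` into `S C i` (`VanishesOn`). At a
resolution step on a light pigeon `i`, more than `2w (r i + 1)` holes are open, at most `w`
of them are taken by heavy pigeons, and the at least `ℓ i` remaining ones are enough zeros to
kill a univariate polynomial of degree less than `ℓ i`. The empty clause has no heavy pigeon,
so `F` vanishes identically, a contradiction.

The parameters can be chosen as soon as `n` exceeds a constant times `s ^ 3`
(`two_pow_le_size`), which gives the theorem with exponent `1 / 4`.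
-/

/-- A clause over variables of type `V`: a finite set of literals, where a literal
is a pair `(x, b)`; `(x, true)` is the literal `x` and `(x, false)` is `¬x`. -/
abbrev Clause (V : Type) := Finset (V × Bool)

/-- An assignment `α` satisfies a clause `C` if it makes some literal of `C` true. -/
def satClause {V : Type} (α : V → Bool) (C : Clause V) : Prop :=
  ∃ l ∈ C, α l.1 = l.2

/-- An assignment satisfies a CNF formula (a finite set of clauses) if it
satisfies every clause. -/
def satCNF {V : Type} (α : V → Bool) (f : Finset (Clause V)) : Prop :=
  ∀ C ∈ f, satClause α C

/-- A CNF formula is unsatisfiable if no assignment satisfies it. -/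
def Unsat {V : Type} (f : Finset (Clause V)) : Prop :=
  ¬ ∃ α : V → Bool, satCNF α f

/-- A Resolution refutation of the CNF formula `f`, given together with its
graph (dag) representation: a sequence of clauses `clause 0, ..., clause (size-1)`
where each clause is either a clause of `f` (a leaf, `step u = none`) or the
resolvent of two earlier clauses (`step u = some (x, a, b)`: the clause `u` is
obtained by resolving clause `a` (containing the literal `x`) and clause `b`
(containing the literal `¬x`) on the variable `x`); the last clause (the root)
is the empty clause. The length of the refutation is `size`. -/
structure ResolutionProof {V : Type} [DecidableEq V] (f : Finset (Clause V)) where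
  size : ℕ
  size_pos : 0 < size
  clause : Fin size → Clause V
  step : Fin size → Option (V × Fin size × Fin size)
  step_axiom : ∀ u, step u = none → clause u ∈ f
  step_lt : ∀ u x a b, step u = some (x, a, b) → (a : ℕ) < (u : ℕ) ∧ (b : ℕ) < (u : ℕ)
  step_res : ∀ u x a b, step u = some (x, a, b) →
    (x, true) ∈ clause a ∧ (x, false) ∈ clause b ∧
    clause u = (clause a).erase (x, true) ∪ (clause b).erase (x, false)
  last_empty : clause ⟨size - 1, Nat.sub_lt size_pos Nat.one_pos⟩ = ∅

namespace ResolutionProof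

variable {V : Type} [DecidableEq V] {f : Finset (Clause V)}

/-- The root of the dag: the last clause (the empty clause). -/
def root (P : ResolutionProof f) : Fin P.size :=
  ⟨P.size - 1, Nat.sub_lt P.size_pos Nat.one_pos⟩

/-- The variable labelling a (non-leaf) node: the variable resolved upon there. -/
def label (P : ResolutionProof f) (u : Fin P.size) : Option V :=
  (P.step u).map Prod.fst

/-- `P.Path u w p` : `p` is a directed path in the dag from `u` to `w`, recorded as
the list of (node, label of the outgoing edge taken) pairs: from a node labelled
`x`, the edge labelled `false` (i.e. 0) leads to the child containing the literal
`x`, and the edge labelled `true` (i.e. 1) leads to the child containing `¬x`. -/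
inductive Path (P : ResolutionProof f) :
    Fin P.size → Fin P.size → List (Fin P.size × Bool) → Prop
  | nil (u : Fin P.size) : Path P u u []
  | cons {u v w : Fin P.size} {x : V} {a b : Fin P.size} {bl : Bool}
      {rest : List (Fin P.size × Bool)}
      (hstep : P.step u = some (x, a, b))
      (hv : v = if bl then b else a)
      (hrest : Path P v w rest) : Path P u w ((u, bl) :: rest)

/-- A path `p` evaluates the variable `x` to `bl` if some node on `p` is labelled
`x`, and after the last node on `p` labelled `x` the path follows the outgoing
edge labelled `bl`. -/
def Evaluates (P : ResolutionProof f) (p : List (Fin P.size × Bool))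
    (x : V) (bl : Bool) : Prop :=
  ∃ i, ∃ hi : i < p.length,
    P.label (p.get ⟨i, hi⟩).1 = some x ∧ (p.get ⟨i, hi⟩).2 = bl ∧
    ∀ j, ∀ hj : j < p.length, i < j → P.label (p.get ⟨j, hj⟩).1 ≠ some x

/-- `Zeros(u)`: the set of variables evaluated to 0 by every path from the root to `u`. -/
def Zeros (P : ResolutionProof f) (u : Fin P.size) : Set V :=
  {x | ∀ p, P.Path P.root u p → P.Evaluates p x false}

/-- `Ones(u)`: the set of variables evaluated to 1 by every path from the root to `u`. -/
def Ones (P : ResolutionProof f) (u : Fin P.size) : Set V :=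
  {x | ∀ p, P.Path P.root u p → P.Evaluates p x true}

/-- A refutation is Regular if along every directed path in its dag each
variable is resolved upon at most once. -/
def Regular (P : ResolutionProof f) : Prop :=
  ∀ u w p, P.Path u w p → (p.map fun s => P.label s.1).Nodup

end ResolutionProof

/-- The pigeon clause `x_{i,1} ∨ ... ∨ x_{i,n}`: pigeon `i` maps to some hole. -/
def pigeonClause (n i : ℕ) : Clause (ℕ × ℕ) :=
  (Finset.Icc 1 n).image fun j => ((i, j), true)

/-- The hole clause `¬x_{i1,j} ∨ ¬x_{i2,j}`: pigeons `i1` and `i2` do not both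
map to hole `j`. -/
def holeClause (j i1 i2 : ℕ) : Clause (ℕ × ℕ) :=
  {((i1, j), false), ((i2, j), false)}

/-- The functionality clause `¬x_{i,j1} ∨ ¬x_{i,j2}`: pigeon `i` does not map to
both hole `j1` and hole `j2`. -/
def funcClause (i j1 j2 : ℕ) : Clause (ℕ × ℕ) :=
  {((i, j1), false), ((i, j2), false)}

/-- The onto clause `x_{1,j} ∨ ... ∨ x_{m,j}`: hole `j` is occupied. -/
def ontoClause (m j : ℕ) : Clause (ℕ × ℕ) :=
  (Finset.Icc 1 m).image fun i => ((i, j), true)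

/-- The CNF formula `¬WPHP^m_n`: the conjunction of all pigeon clauses and hole
clauses, over variables `x_{i,j}` for `1 ≤ i ≤ m`, `1 ≤ j ≤ n`. -/
def WPHPneg (m n : ℕ) : Finset (Clause (ℕ × ℕ)) :=
  ((Finset.Icc 1 m).image fun i => pigeonClause n i) ∪
  (((Finset.Icc 1 m ×ˢ Finset.Icc 1 m ×ˢ Finset.Icc 1 n).filter
      fun t => t.1 < t.2.1).image fun t => holeClause t.2.2 t.1 t.2.1)

/-- The CNF formula `¬FWPHP^m_n` (weak functional PHP): additionally each pigeon
goes to exactly one hole. -/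
def FWPHPneg (m n : ℕ) : Finset (Clause (ℕ × ℕ)) :=
  WPHPneg m n ∪
  (((Finset.Icc 1 m ×ˢ Finset.Icc 1 n ×ˢ Finset.Icc 1 n).filter
      fun t => t.2.1 < t.2.2).image fun t => funcClause t.1 t.2.1 t.2.2)

/-- The CNF formula `¬FOWPHP^m_n` (weak functional onto PHP): additionally every
hole is occupied. -/
def FOWPHPneg (m n : ℕ) : Finset (Clause (ℕ × ℕ)) :=
  FWPHPneg m n ∪ ((Finset.Icc 1 n).image fun j => ontoClause m j)

open Finset

/-! ### Choosing the thresholds -/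

/-- The tail `Pr[k ≥ a]` of the geometric distribution on `ℕ` truncated to `{0, …, T}`. -/
noncomputable def geomTail (T a : ℕ) : ℝ := if a ≤ T then (1 / 2 : ℝ) ^ a else 0

/-- The point mass at `k` of the truncated geometric distribution. -/
noncomputable def geomWeight (T k : ℕ) : ℝ := geomTail T k - geomTail T (k + 1)

lemma geomWeight_pos {T k : ℕ} (h : k ≤ T) : 0 < geomWeight T k := by
  unfold geomWeight geomTail
  have : (0 : ℝ) < (1 / 2 : ℝ) ^ k := by positivity
  rw [if_pos h]
  split_ifs
  · rw [pow_succ]; linarith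
  · linarith

lemma geomTail_nonneg (T a : ℕ) : 0 ≤ geomTail T a := by
  unfold geomTail; split_ifs <;> positivity

lemma sum_geomWeight_ite (T a : ℕ) (b : ℝ) :
    ∑ k ∈ range (T + 1), geomWeight T k * (if a ≤ k then b else 1)
      = 1 + (b - 1) * geomTail T a := by
  have tel : ∀ N, ∑ k ∈ range N, geomWeight T k * (if a ≤ k then b else 1)
      = 1 - geomTail T N + (b - 1) * (if a ≤ N then geomTail T a - geomTail T N else 0) := by
    intro N
    induction N with
    | zero =>
      rcases Nat.eq_zero_or_pos a with h | h
      · subst h; simp [geomTail]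
      · simp [geomTail, h.ne']
    | succ N ih =>
      rw [sum_range_succ, ih]
      unfold geomWeight
      by_cases h1 : a ≤ N
      · rw [if_pos h1, if_pos h1, if_pos (by omega)]; ring
      · rw [if_neg h1, if_neg h1]
        by_cases h2 : a ≤ N + 1
        · obtain rfl : a = N + 1 := by omega
          simp
        · rw [if_neg h2]; ring
  rw [tel]
  have h0 : geomTail T (T + 1) = 0 := by simp [geomTail]
  rw [h0]
  by_cases h : a ≤ T + 1
  · rw [if_pos h]; ring
  · rw [if_neg h]
    have : geomTail T a = 0 := by simp [geomTail]; omega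
    rw [this]; ring

lemma geomTail_sub_two_le (T v : ℕ) :
    geomTail T (v - 2) ≤ 2 * geomTail T (v - 1) + (1 / 2 : ℝ) ^ T := by
  have hT : (0 : ℝ) < (1 / 2 : ℝ) ^ T := by positivity
  by_cases h : v - 1 ≤ T
  · by_cases h2 : 2 ≤ v
    · obtain ⟨k, rfl⟩ : ∃ k, v = k + 2 := ⟨v - 2, by omega⟩
      have e1 : k + 2 - 1 = k + 1 := by omega
      simp only [geomTail, e1, Nat.add_sub_cancel] at *
      rw [if_pos h, if_pos (by omega), pow_succ]; linarith
    · have e1 : v - 1 = 0 := by omega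
      have e2 : v - 2 = 0 := by omega
      simp only [geomTail, e1, e2]
      simp only [Nat.zero_le, if_true, pow_zero]; linarith
  · have : geomTail T (v - 1) = 0 := by unfold geomTail; rw [if_neg h]
    rw [this]
    by_cases h3 : v - 2 ≤ T
    · have : v - 2 = T := by omega
      simp [geomTail, this]
    · unfold geomTail; rw [if_neg h3]; linarith

/-- Product-measure expectation of `∏ b ^ [a i ≤ k i]`. -/
lemma sum_prod_geomWeight {ι : Type*} [Fintype ι] [DecidableEq ι] (T : ℕ) (a : ι → ℕ) (b : ℝ) :
    ∑ k ∈ Fintype.piFinset (fun _ : ι => range (T + 1)),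
      (∏ i, geomWeight T (k i)) * b ^ (#{i | a i ≤ k i})
      = ∏ i, (1 + (b - 1) * geomTail T (a i)) := by
  rw [← Finset.prod_congr rfl (fun i _ => sum_geomWeight_ite T (a i) b), Finset.prod_univ_sum]
  refine Finset.sum_congr rfl fun k _ => ?_
  rw [Finset.prod_mul_distrib]
  congr 1
  rw [Finset.prod_ite]; simp

/-- The chance that fewer than `w₀` pigeons reach their level is exponentially small when the
expected number of them is at least `4 w₀`. -/
lemma lower_tail_bound {ι : Type*} [Fintype ι] (w₀ : ℕ) (p : ι → ℝ)
    (hp1 : ∀ i, p i ≤ 2) (hμ : 4 * (w₀ : ℝ) ≤ ∑ i, p i) :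
    2 ^ w₀ * ∏ i, (1 + (1 / 2 - 1) * p i) ≤ (1 / 2 : ℝ) ^ w₀ := by
  have h1 : ∏ i, (1 + (1 / 2 - 1) * p i) ≤ Real.exp (-2) ^ w₀ := by
    calc ∏ i, (1 + (1 / 2 - 1) * p i) ≤ ∏ i, Real.exp (-(p i / 2)) := by
          refine Finset.prod_le_prod (fun i _ => ?_) (fun i _ => ?_)
          · linarith [hp1 i]
          · have := Real.add_one_le_exp (-(p i / 2)); linarith
      _ = Real.exp (∑ i, -(p i / 2)) := (Real.exp_sum _ _).symm
      _ ≤ Real.exp (w₀ * (-2)) := by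
          apply Real.exp_le_exp.mpr
          rw [Finset.sum_neg_distrib, ← Finset.sum_div]; linarith
      _ = Real.exp (-2) ^ w₀ := Real.exp_nat_mul _ _
  have h2 : Real.exp (-2) ≤ 1 / 4 := by
    rw [Real.exp_neg, one_div]
    apply inv_anti₀ (by norm_num)
    have : Real.exp 2 = Real.exp 1 * Real.exp 1 := by rw [← Real.exp_add]; norm_num
    rw [this]; nlinarith [Real.exp_one_gt_d9]
  calc 2 ^ w₀ * ∏ i, (1 + (1 / 2 - 1) * p i) ≤ 2 ^ w₀ * (1 / 4 : ℝ) ^ w₀ := by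
        gcongr
        exact h1.trans (pow_le_pow_left₀ (Real.exp_pos _).le h2 _)
    _ = (1 / 2 : ℝ) ^ w₀ := by rw [← mul_pow]; norm_num

/-- The chance that more than `16 w₀` pigeons come within one of their level is exponentially
small when the expected number of them is at most `8 w₀ + 1`. -/
lemma upper_tail_bound {ι : Type*} [Fintype ι] (w₀ : ℕ) (hw : 1 ≤ w₀) (q : ι → ℝ)
    (hq : ∀ i, 0 ≤ q i) (hμ : ∑ i, q i ≤ 8 * w₀ + 1) :
    (1 / 2 : ℝ) ^ (16 * w₀) * ∏ i, (1 + (2 - 1) * q i) ≤ (1 / 2 : ℝ) ^ w₀ := by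
  have hw' : (1 : ℝ) ≤ w₀ := by exact_mod_cast hw
  have h1 : ∏ i, (1 + (2 - 1) * q i) ≤ Real.exp 9 ^ w₀ := by
    calc ∏ i, (1 + (2 - 1) * q i) ≤ ∏ i, Real.exp (q i) := by
          refine Finset.prod_le_prod (fun i _ => ?_) (fun i _ => ?_)
          · linarith [hq i]
          · have := Real.add_one_le_exp (q i); linarith
      _ = Real.exp (∑ i, q i) := (Real.exp_sum _ _).symm
      _ ≤ Real.exp (w₀ * 9) := by
          apply Real.exp_le_exp.mpr; linarith
      _ = Real.exp 9 ^ w₀ := Real.exp_nat_mul _ _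
  have h2 : Real.exp 9 ≤ 2 ^ 15 := by
    have : Real.exp 9 = Real.exp 1 ^ 9 := by rw [← Real.exp_nat_mul]; norm_num
    rw [this]
    calc Real.exp 1 ^ 9 ≤ (2.8 : ℝ) ^ 9 :=
          pow_le_pow_left₀ (Real.exp_pos _).le (by linarith [Real.exp_one_lt_d9]) _
      _ ≤ 2 ^ 15 := by norm_num
  calc (1 / 2 : ℝ) ^ (16 * w₀) * ∏ i, (1 + (2 - 1) * q i)
      ≤ (1 / 2 : ℝ) ^ (16 * w₀) * ((2 : ℝ) ^ 15) ^ w₀ := by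
        gcongr
        exact h1.trans (pow_le_pow_left₀ (Real.exp_pos _).le h2 _)
    _ = (1 / 2 : ℝ) ^ w₀ := by rw [pow_mul, ← mul_pow]; norm_num

/-- The filter lemma: levels `r i ∈ {1, …, T + 1}` for which every vector `v u` either has at
least `w₀` coordinates `≤ r i`, or at most `16 w₀` coordinates `≤ r i + 1`. -/
lemma exists_thresholds {ι U : Type*} [Fintype ι] [DecidableEq ι] [Fintype U]
    (v : U → ι → ℕ) (T w₀ : ℕ) (hw : 1 ≤ w₀)
    (hι : Fintype.card ι ≤ 2 ^ T) (hU : Fintype.card U ≤ 2 ^ w₀) :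
    ∃ r : ι → ℕ, (∀ i, 1 ≤ r i ∧ r i ≤ T + 1) ∧
      ∀ u, w₀ ≤ #{i | v u i ≤ r i} ∨ #{i | v u i ≤ r i + 1} ≤ 16 * w₀ := by
  classical
  -- The potential of `u`: an exponential moment penalising whichever alternative is unlikely.
  let bad : U → (ι → ℕ) → ℝ := fun u k =>
    if 4 * (w₀ : ℝ) ≤ ∑ i, geomTail T (v u i - 1)
    then 2 ^ w₀ * (1 / 2 : ℝ) ^ (#{i | v u i - 1 ≤ k i})
    else (1 / 2 : ℝ) ^ (16 * w₀) * (2 : ℝ) ^ (#{i | v u i - 2 ≤ k i})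
  let K := Fintype.piFinset (fun _ : ι => range (T + 1))
  let W : (ι → ℕ) → ℝ := fun k => ∏ i, geomWeight T (k i)
  have hbad : ∀ u, ∑ k ∈ K, W k * bad u k ≤ (1 / 2 : ℝ) ^ w₀ := by
    intro u
    by_cases hμ : 4 * (w₀ : ℝ) ≤ ∑ i, geomTail T (v u i - 1)
    · have e : ∑ k ∈ K, W k * bad u k = 2 ^ w₀ * ∏ i, (1 + (1 / 2 - 1) * geomTail T (v u i - 1)) := by
        rw [← sum_prod_geomWeight, Finset.mul_sum]
        refine Finset.sum_congr rfl fun k _ => ?_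
        simp only [bad, W]; rw [if_pos hμ]; ring
      rw [e]
      refine lower_tail_bound w₀ _ (fun i => ?_) hμ
      unfold geomTail
      split_ifs
      · have : (1 / 2 : ℝ) ^ (v u i - 1) ≤ 1 := pow_le_one₀ (by norm_num) (by norm_num)
        linarith
      · norm_num
    · have e : ∑ k ∈ K, W k * bad u k
          = (1 / 2 : ℝ) ^ (16 * w₀) * ∏ i, (1 + (2 - 1) * geomTail T (v u i - 2)) := by
        rw [← sum_prod_geomWeight, Finset.mul_sum]
        refine Finset.sum_congr rfl fun k _ => ?_
        simp only [bad, W]; rw [if_neg hμ]; ring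
      rw [e]
      refine upper_tail_bound w₀ hw _ (fun i => geomTail_nonneg _ _) ?_
      have hc : (Fintype.card ι : ℝ) * (1 / 2 : ℝ) ^ T ≤ 1 := by
        have : (Fintype.card ι : ℝ) ≤ 2 ^ T := by exact_mod_cast hι
        calc (Fintype.card ι : ℝ) * (1 / 2 : ℝ) ^ T ≤ 2 ^ T * (1 / 2 : ℝ) ^ T := by gcongr
          _ = 1 := by rw [← mul_pow]; norm_num
      calc ∑ i, geomTail T (v u i - 2)
          ≤ ∑ i, (2 * geomTail T (v u i - 1) + (1 / 2 : ℝ) ^ T) :=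
            Finset.sum_le_sum fun i _ => geomTail_sub_two_le _ _
        _ = 2 * ∑ i, geomTail T (v u i - 1) + Fintype.card ι * (1 / 2 : ℝ) ^ T := by
            rw [Finset.sum_add_distrib, ← Finset.mul_sum]; simp
        _ ≤ 8 * w₀ + 1 := by push Not at hμ; linarith
  have hW : ∑ k ∈ K, W k = 1 := by
    have := sum_prod_geomWeight (ι := ι) T (fun _ => 0) 1
    simpa using this
  have hsum : ∑ k ∈ K, W k * ∑ u, bad u k ≤ ∑ k ∈ K, W k := by
    rw [hW]
    calc ∑ k ∈ K, W k * ∑ u, bad u k = ∑ u, ∑ k ∈ K, W k * bad u k := by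
          rw [Finset.sum_comm]; simp [Finset.mul_sum]
      _ ≤ ∑ _u : U, (1 / 2 : ℝ) ^ w₀ := Finset.sum_le_sum fun u _ => hbad u
      _ = Fintype.card U * (1 / 2 : ℝ) ^ w₀ := by simp
      _ ≤ 2 ^ w₀ * (1 / 2 : ℝ) ^ w₀ := by
          gcongr; exact_mod_cast hU
      _ = 1 := by rw [← mul_pow]; norm_num
  have hne : K.Nonempty := ⟨fun _ => 0, by simp [K]⟩
  obtain ⟨k, hk, hle⟩ := Finset.exists_le_of_sum_le hne hsum
  have hkT : ∀ i, k i ≤ T := fun i => by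
    have := Fintype.mem_piFinset.mp hk i
    rw [Finset.mem_range] at this; omega
  have hWpos : 0 < W k := Finset.prod_pos fun i _ => geomWeight_pos (hkT i)
  have hΦ : ∑ u, bad u k ≤ 1 := by
    by_contra hcon
    push Not at hcon
    nlinarith
  have hnn : ∀ u, 0 ≤ bad u k := fun u => by
    simp only [bad]; split_ifs <;> positivity
  refine ⟨fun i => k i + 1, fun i => ⟨Nat.le_add_left _ _, Nat.succ_le_succ (hkT i)⟩, fun u => ?_⟩
  have hu : bad u k ≤ 1 :=
    (Finset.single_le_sum (f := fun u => bad u k) (fun u _ => hnn u) (Finset.mem_univ u)).trans hΦ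
  have e1 : ∀ i, (v u i - 1 ≤ k i) ↔ (v u i ≤ k i + 1) := fun i => by omega
  have e2 : ∀ i, (v u i - 2 ≤ k i) ↔ (v u i ≤ k i + 1 + 1) := fun i => by omega
  simp only [bad, e1, e2] at hu
  split_ifs at hu
  · left
    by_contra hcon
    push Not at hcon
    have : (1 : ℝ) < 2 ^ w₀ * (1 / 2 : ℝ) ^ (#{i | v u i ≤ k i + 1}) := by
      rw [one_div, inv_pow, ← div_eq_mul_inv, one_lt_div (by positivity)]
      exact pow_lt_pow_right₀ (by norm_num) hcon
    linarith
  · right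
    by_contra hcon
    push Not at hcon
    have : (1 : ℝ) < (1 / 2 : ℝ) ^ (16 * w₀) * 2 ^ (#{i | v u i ≤ k i + 1 + 1}) := by
      rw [one_div, inv_pow, mul_comm, ← div_eq_mul_inv, one_lt_div (by positivity)]
      exact pow_lt_pow_right₀ (by norm_num) hcon
    linarith

/-! ### Polynomials of bounded degree in each variable -/

/-- `F` vanishes at `x` once it vanishes at `ℓ i` points of some line through `x` in direction
`i`. This is the only property used of polynomials of degree less than `ℓ i` in variable `i`. -/
def LineProperty {ι : Type*} [DecidableEq ι] (ℓ : ι → ℕ) (F : (ι → ℕ) → ℚ) : Prop :=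
  ∀ (x : ι → ℕ) (i : ι) (A : Finset ℕ), ℓ i ≤ #A →
    (∀ j ∈ A, F (Function.update x i j) = 0) → F x = 0

/-- If `F` vanishes on the grid `∏ A i` and `#(A i) ≥ ℓ i` for `i ∈ J`, then the coordinates
in `J` may be freed. -/
lemma LineProperty.eq_zero_of_grid {ι : Type*} [DecidableEq ι]
    {ℓ : ι → ℕ} {F : (ι → ℕ) → ℚ} (hF : LineProperty ℓ F) (A : ι → Finset ℕ)
    (hA : ∀ x, (∀ i, x i ∈ A i) → F x = 0) (J : Finset ι) (hJ : ∀ i ∈ J, ℓ i ≤ #(A i)) :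
    ∀ x, (∀ i, i ∉ J → x i ∈ A i) → F x = 0 := by
  induction J using Finset.induction_on with
  | empty => intro x hx; exact hA x fun i => hx i (by simp)
  | insert a J ha ih =>
    intro x hx
    refine hF x a (A a) (hJ a (by simp)) fun j hj => ?_
    refine ih (fun i hi => hJ i (by simp [hi])) _ fun i hi => ?_
    by_cases h : i = a
    · subst h; simpa using hj
    · rw [Function.update_of_ne h]; exact hx i (by simp [h, hi])

/-- Fewer than `∏ ℓ i` points impose dependent conditions on polynomials of degree `< ℓ i` in
each variable. The polynomials are written in the tensor Lagrange basis on the grid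
`∏ {0, …, ℓ i - 1}`, which makes it plain that nonzero coefficients give a nonzero function. -/
lemma exists_vanishing {ι : Type*} [Fintype ι] [DecidableEq ι] (ℓ : ι → ℕ)
    (Q : Finset (ι → ℕ)) (hQ : #Q < ∏ i, ℓ i) :
    ∃ F : (ι → ℕ) → ℚ, LineProperty ℓ F ∧ (∀ x ∈ Q, F x = 0) ∧ ∃ x, F x ≠ 0 := by
  classical
  let B : ∀ i, Fin (ℓ i) → Polynomial ℚ := fun i k =>
    Lagrange.basis Finset.univ (fun k : Fin (ℓ i) => ((k : ℕ) : ℚ)) k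
  have hinj : ∀ i, Set.InjOn (fun k : Fin (ℓ i) => ((k : ℕ) : ℚ))
      ((Finset.univ : Finset (Fin (ℓ i))) : Set (Fin (ℓ i))) := by
    intro i a _ b _ hab
    exact Fin.ext (Nat.cast_injective (R := ℚ) hab)
  let Φ : ((∀ i, Fin (ℓ i)) → ℚ) →ₗ[ℚ] ((ι → ℕ) → ℚ) :=
    { toFun := fun c x => ∑ k, c k * ∏ i, (B i (k i)).eval ((x i : ℕ) : ℚ)
      map_add' := by
        intro c c'; funext x; simp [add_mul, Finset.sum_add_distrib]
      map_smul' := by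
        intro a c; funext x; simp [Finset.mul_sum, mul_assoc] }
  let R : ((ι → ℕ) → ℚ) →ₗ[ℚ] (Q → ℚ) := LinearMap.funLeft ℚ ℚ (fun q : Q => (q : ι → ℕ))
  have hker : LinearMap.ker (R ∘ₗ Φ) ≠ ⊥ := by
    apply LinearMap.ker_ne_bot_of_finrank_lt
    simpa using hQ
  obtain ⟨c, hc, hc0⟩ := Submodule.exists_mem_ne_zero_of_ne_bot hker
  refine ⟨Φ c, ?_, ?_, ?_⟩
  · intro x i A hA hz
    let p : Polynomial ℚ := ∑ k : ∀ i, Fin (ℓ i),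
      Polynomial.C (c k * ∏ i' ∈ Finset.univ.erase i, (B i' (k i')).eval ((x i' : ℕ) : ℚ))
        * B i (k i)
    have hp : ∀ j : ℕ, p.eval (j : ℚ) = Φ c (Function.update x i j) := by
      intro j
      change _ = ∑ k, c k * ∏ i', (B i' (k i')).eval ((Function.update x i j i' : ℕ) : ℚ)
      simp only [p, Polynomial.eval_finsetSum, Polynomial.eval_mul, Polynomial.eval_C]
      refine Finset.sum_congr rfl fun k _ => ?_
      rw [← Finset.prod_erase_mul _ _ (Finset.mem_univ i), ← mul_assoc]
      congr 1
      · congr 1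
        refine Finset.prod_congr rfl fun i' hi' => ?_
        rw [Function.update_of_ne (Finset.ne_of_mem_erase hi')]
      · simp
    have hdeg : p.degree < ℓ i := by
      refine lt_of_le_of_lt (Polynomial.degree_sum_le _ _) ?_
      rw [Finset.sup_lt_iff (WithBot.bot_lt_coe _)]
      intro k _
      rw [← Polynomial.smul_eq_C_mul]
      refine lt_of_le_of_lt (Polynomial.degree_smul_le _ _) ?_
      rw [Lagrange.degree_basis (hinj i) (Finset.mem_univ _)]
      have := (k i).pos
      simp only [Finset.card_univ, Fintype.card_fin]
      exact_mod_cast Nat.sub_lt this one_pos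
    have hp0 : p = 0 := by
      refine Polynomial.eq_zero_of_degree_lt_of_eval_finset_eq_zero (A.image fun j : ℕ => (j : ℚ)) ?_ ?_
      · rw [Finset.card_image_of_injective _ Nat.cast_injective]
        exact lt_of_lt_of_le hdeg (by exact_mod_cast hA)
      · intro y hy
        obtain ⟨j, hj, rfl⟩ := Finset.mem_image.mp hy
        rw [hp, hz j hj]
    have := hp (x i)
    rw [Function.update_eq_self, hp0] at this
    simpa using this.symm
  · intro x hx
    have := congrFun (LinearMap.mem_ker.mp hc) ⟨x, hx⟩
    exact this
  · obtain ⟨k₀, hk₀⟩ : ∃ k, c k ≠ 0 := by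
      by_contra hcon; push Not at hcon; exact hc0 (funext hcon)
    refine ⟨fun i => (k₀ i : ℕ), ?_⟩
    have : Φ c (fun i => (k₀ i : ℕ)) = c k₀ := by
      change ∑ k, c k * ∏ i, (B i (k i)).eval (((k₀ i : ℕ)) : ℚ) = c k₀
      rw [Finset.sum_eq_single k₀]
      · rw [Finset.prod_eq_one, mul_one]
        intro i _
        exact Lagrange.eval_basis_self (hinj i) (Finset.mem_univ _)
      · intro k _ hk
        obtain ⟨i, hi⟩ := Function.ne_iff.mp hk
        rw [Finset.prod_eq_zero (Finset.mem_univ i), mul_zero]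
        exact Lagrange.eval_basis_of_ne (v := fun k : Fin (ℓ i) => ((k : ℕ) : ℚ)) hi
          (Finset.mem_univ _)
      · simp
    rwa [this]

/-- Counting: restricting to `2 w r` rather than `w (2 r + 1)` values in each of `≥ w₀`
coordinates shrinks the grid by a factor `2 ^ s`, where `w₀ = s (2 t + 1)` and `r ≤ t`. -/
lemma grid_card_mul_le {ι : Type*} [Fintype ι] [DecidableEq ι] (s t w : ℕ) (ht : 1 ≤ t)
    (r : ι → ℕ) (hr : ∀ i, r i ≤ t) (I : Finset ι) (hI : s * (2 * t + 1) ≤ #I)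
    (a : ι → ℕ) (ha : ∀ i ∈ I, a i ≤ 2 * w * r i) (ha' : ∀ i ∉ I, a i ≤ w * (2 * r i + 1)) :
    2 ^ s * ∏ i, a i ≤ ∏ i, w * (2 * r i + 1) := by
  -- Bernoulli: `(1 + 1 / (2t)) ^ (2t + 1) ≥ 2`, with denominators cleared.
  have hb : 2 * (2 * t) ^ (2 * t + 1) ≤ (2 * t + 1) ^ (2 * t + 1) := by
    have hreal : (2 : ℝ) * (2 * t) ^ (2 * t + 1) ≤ (2 * t + 1) ^ (2 * t + 1) := by
      have htp : (0 : ℝ) < 2 * t := by have : (1 : ℝ) ≤ t := by exact_mod_cast ht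
                                       linarith
      have h := one_add_mul_le_pow (a := 1 / (2 * t : ℝ)) (by
        have : 0 < 1 / (2 * t : ℝ) := by positivity
        linarith) (2 * t + 1)
      have h2 : (2 : ℝ) ≤ (1 + 1 / (2 * t)) ^ (2 * t + 1) := by
        refine le_trans ?_ h
        push_cast
        have : ((2 * t + 1 : ℝ)) * (1 / (2 * t)) = 1 + 1 / (2 * t) := by field_simp
        rw [this]
        have : 0 < 1 / (2 * t : ℝ) := by positivity
        linarith
      calc (2 : ℝ) * (2 * t) ^ (2 * t + 1)
          ≤ (1 + 1 / (2 * t)) ^ (2 * t + 1) * (2 * t) ^ (2 * t + 1) := by gcongr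
        _ = (2 * t + 1) ^ (2 * t + 1) := by
            rw [← mul_pow]; congr 1; field_simp
    exact_mod_cast hreal
  have hpow : 2 ^ s * (2 * t) ^ (#I) ≤ (2 * t + 1) ^ (#I) := by
    obtain ⟨e, he⟩ := Nat.exists_eq_add_of_le hI
    rw [he, pow_add, pow_add, mul_comm s, pow_mul, pow_mul, ← mul_assoc, ← mul_pow]
    gcongr
    omega
  have hprod : (2 * t + 1) ^ (#I) * ∏ i, a i ≤ (2 * t) ^ (#I) * ∏ i, w * (2 * r i + 1) := by
    have e : ∀ c : ℕ, c ^ (#I) = ∏ i, if i ∈ I then c else 1 := by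
      intro c; rw [Finset.prod_ite_mem]; simp
    rw [e, e, ← Finset.prod_mul_distrib, ← Finset.prod_mul_distrib]
    refine Finset.prod_le_prod' fun i _ => ?_
    by_cases h : i ∈ I
    · simp only [if_pos h]
      have h1 := ha i h
      have h2 := hr i
      calc (2 * t + 1) * a i ≤ (2 * t + 1) * (2 * w * r i) := by gcongr
        _ = w * (4 * t * r i + 2 * r i) := by ring
        _ ≤ w * (4 * t * r i + 2 * t) := by gcongr
        _ = 2 * t * (w * (2 * r i + 1)) := by ring
    · simp only [if_neg h, one_mul]; exact ha' i h
  have hpos : 0 < (2 * t) ^ (#I) := by positivity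
  refine Nat.le_of_mul_le_mul_left ?_ hpos
  calc (2 * t) ^ (#I) * (2 ^ s * ∏ i, a i) = 2 ^ s * (2 * t) ^ (#I) * ∏ i, a i := by ring
    _ ≤ (2 * t + 1) ^ (#I) * ∏ i, a i := by gcongr
    _ ≤ _ := hprod

/-! ### Propagating zeros along a refutation -/

open Classical in
/-- The holes to which pigeon `i` may be sent without satisfying the clause `C`. -/
noncomputable def openHoles (n : ℕ) (C : Clause (ℕ × ℕ)) (i : ℕ) : Finset ℕ :=
  (Icc 1 n).filter fun j => ∀ j' b, ((i, j'), b) ∈ C → decide (j' = j) ≠ b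

lemma mem_openHoles {n : ℕ} {C : Clause (ℕ × ℕ)} {i j : ℕ} :
    j ∈ openHoles n C i ↔ j ∈ Icc 1 n ∧ ∀ j' b, ((i, j'), b) ∈ C → decide (j' = j) ≠ b := by
  simp [openHoles]

/-- The pigeons in `M` with at most `D i` open holes. -/
noncomputable def heavy (n : ℕ) (M : Finset ℕ) (D : M → ℕ) (C : Clause (ℕ × ℕ)) : Finset M :=
  {i | #(openHoles n C i) ≤ D i}

lemma mem_heavy {n : ℕ} {M : Finset ℕ} {D : M → ℕ} {C : Clause (ℕ × ℕ)} {i : M} :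
    i ∈ heavy n M D C ↔ #(openHoles n C i) ≤ D i := by
  simp [heavy]

/-- The invariant of the refutation: `F` vanishes at each `x` that is injective on the heavy
pigeons of `C` and does not satisfy `C` through them. Pigeons outside `M` are unassigned, that
is, all their variables are false, so a clause with a negative literal of such a pigeon is
satisfied and the condition on it is void. -/
def VanishesOn (n : ℕ) (M : Finset ℕ) (D : M → ℕ) (F : (M → ℕ) → ℚ) (C : Clause (ℕ × ℕ)) : Prop :=
  (∀ i j, ((i, j), false) ∈ C → i ∈ M) → ∀ x : M → ℕ,
    (∀ i ∈ heavy n M D C, x i ∈ openHoles n C i) → Set.InjOn x (heavy n M D C : Set M) → F x = 0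

section Invariant

variable {n : ℕ} {M : Finset ℕ} {D : M → ℕ} {F : (M → ℕ) → ℚ}

lemma openHoles_subset_of_ne {C C' : Clause (ℕ × ℕ)} {i : ℕ}
    (h : ∀ j b, ((i, j), b) ∈ C' → ((i, j), b) ∈ C) : openHoles n C i ⊆ openHoles n C' i := by
  intro j hj
  rw [mem_openHoles] at hj ⊢
  exact ⟨hj.1, fun j' b hb => hj.2 j' b (h j' b hb)⟩

lemma vanishesOn_pigeon (i : ℕ) (hi : i ∈ M) : VanishesOn n M D F (pigeonClause n i) := by
  intro _ x hx _
  have hempty : openHoles n (pigeonClause n i) i = ∅ := by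
    refine Finset.eq_empty_of_forall_notMem fun j hj => ?_
    rw [mem_openHoles] at hj
    exact hj.2 j true (Finset.mem_image.mpr ⟨j, hj.1, rfl⟩) (by simp)
  have := hx ⟨i, hi⟩ (by rw [mem_heavy]; simp [hempty])
  simp [hempty] at this

lemma openHoles_eq_of_neg {C : Clause (ℕ × ℕ)} {i j a : ℕ}
    (h : ((i, j), false) ∈ C) (ha : a ∈ openHoles n C i) : a = j := by
  have := (mem_openHoles.mp ha).2 j false h
  simpa [eq_comm] using this

lemma heavy_of_neg (hD : ∀ i, 1 ≤ D i) {C : Clause (ℕ × ℕ)} {i : M} {j : ℕ}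
    (h : ((↑i, j), false) ∈ C) : i ∈ heavy n M D C := by
  rw [mem_heavy]
  refine le_trans (Finset.card_le_one.mpr fun a ha b hb => ?_) (hD i)
  rw [openHoles_eq_of_neg h ha, openHoles_eq_of_neg h hb]

lemma vanishesOn_hole (hD : ∀ i, 1 ≤ D i) (j i₁ i₂ : ℕ) (hne : i₁ ≠ i₂) :
    VanishesOn n M D F (holeClause j i₁ i₂) := by
  intro hM x hx hinj
  have m₁ : ((i₁, j), false) ∈ holeClause j i₁ i₂ := by simp [holeClause]
  have m₂ : ((i₂, j), false) ∈ holeClause j i₁ i₂ := by simp [holeClause]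
  have h₁ := heavy_of_neg (n := n) hD (i := ⟨i₁, hM _ _ m₁⟩) m₁
  have h₂ := heavy_of_neg (n := n) hD (i := ⟨i₂, hM _ _ m₂⟩) m₂
  have e := hinj h₁ h₂ ((openHoles_eq_of_neg m₁ (hx _ h₁)).trans
    (openHoles_eq_of_neg m₂ (hx _ h₂)).symm)
  exact absurd (congrArg Subtype.val e) hne

lemma vanishesOn_func (hD : ∀ i, 1 ≤ D i) (i j₁ j₂ : ℕ) (hne : j₁ ≠ j₂) :
    VanishesOn n M D F (funcClause i j₁ j₂) := by
  intro hM x hx _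
  have m₁ : ((i, j₁), false) ∈ funcClause i j₁ j₂ := by simp [funcClause]
  have m₂ : ((i, j₂), false) ∈ funcClause i j₁ j₂ := by simp [funcClause]
  have h₁ := heavy_of_neg (n := n) hD (i := ⟨i, hM _ _ m₁⟩) m₁
  exact absurd ((openHoles_eq_of_neg m₁ (hx _ h₁)).symm.trans
    (openHoles_eq_of_neg m₂ (hx _ h₁))) hne

/-- One premise `C'` of a resolution step on the variable `(i₀, j₀)`, where `y` falsifies the
resolved literal `((i₀, j₀), bl)`: since every heavy pigeon of `C'` is heavy in the resolvent
`C` or equal to `i₀`, the invariant for `C'` applies to `y`. -/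
lemma eq_zero_of_premise {C C' : Clause (ℕ × ℕ)} {i₀ j₀ : ℕ} {bl : Bool}
    (hsub : ∀ l ∈ C', l ≠ ((i₀, j₀), bl) → l ∈ C) (hC' : VanishesOn n M D F C')
    (hneg : ∀ i j, ((i, j), false) ∈ C → i ∈ M) (hi₀ : bl = false → i₀ ∈ M)
    (y : M → ℕ) (hbl : ∀ h : i₀ ∈ M, decide (j₀ = y ⟨i₀, h⟩) ≠ bl)
    (hy : ∀ i : M, i ∈ heavy n M D C ∨ (i : ℕ) = i₀ → y i ∈ openHoles n C i)
    (hinj : Set.InjOn y {i | i ∈ heavy n M D C ∨ (i : ℕ) = i₀}) : F y = 0 := by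
  have hheavy : ∀ i ∈ heavy n M D C', i ∈ heavy n M D C ∨ (i : ℕ) = i₀ := by
    intro i hi
    by_cases h : (i : ℕ) = i₀
    · exact Or.inr h
    · left
      rw [mem_heavy] at hi ⊢
      refine le_trans (Finset.card_le_card (openHoles_subset_of_ne fun j b hb => ?_)) hi
      exact hsub _ hb fun e => h (by simpa using congrArg (fun l => l.1.1) e)
  refine hC' (fun i j hij => ?_) y (fun i hi => ?_) (hinj.mono fun i hi => hheavy i hi)
  · by_cases e : ((i, j), false) = ((i₀, j₀), bl)
    · simp only [Prod.mk.injEq] at e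
      rw [e.1.1]; exact hi₀ e.2.symm
    · exact hneg i j (hsub _ hij e)
  · have h := mem_openHoles.mp (hy i (hheavy i hi))
    refine mem_openHoles.mpr ⟨h.1, fun j' b hb => ?_⟩
    by_cases e : (((i : ℕ), j'), b) = ((i₀, j₀), bl)
    · simp only [Prod.mk.injEq] at e
      obtain ⟨⟨rfl, rfl⟩, rfl⟩ := e
      exact hbl i.2
    · exact h.2 j' b (hsub _ hb e)

/-- The resolution step: if the resolved pigeon is light, its value can be moved to more
than `D i - w ≥ ℓ i` open holes that the at most `w` heavy pigeons leave free. -/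
lemma vanishesOn_resolvent {ℓ : M → ℕ} {w : ℕ} (hF : LineProperty ℓ F)
    (hℓ : ∀ i, ℓ i + w ≤ D i) {C A B : Clause (ℕ × ℕ)} {v : ℕ × ℕ}
    (hC : C = A.erase (v, true) ∪ B.erase (v, false)) (hw : #(heavy n M D C) ≤ w)
    (hA : VanishesOn n M D F A) (hB : VanishesOn n M D F B) : VanishesOn n M D F C := by
  classical
  obtain ⟨i₀, j₀⟩ := v
  have hAs : ∀ l ∈ A, l ≠ ((i₀, j₀), true) → l ∈ C := fun l hl hne => by
    rw [hC]; simp [hl, hne]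
  have hBs : ∀ l ∈ B, l ≠ ((i₀, j₀), false) → l ∈ C := fun l hl hne => by
    rw [hC]; simp [hl, hne]
  intro hneg x hx hinj
  by_cases hi₀ : i₀ ∈ M
  · have key : ∀ y : M → ℕ,
        (∀ i : M, i ∈ heavy n M D C ∨ (i : ℕ) = i₀ → y i ∈ openHoles n C i) →
        Set.InjOn y {i | i ∈ heavy n M D C ∨ (i : ℕ) = i₀} → F y = 0 := by
      intro y hy hyinj
      by_cases hj : j₀ = y ⟨i₀, hi₀⟩
      · exact eq_zero_of_premise hBs hB hneg (fun _ => hi₀) y (fun _ => by simp [← hj]) hy hyinj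
      · exact eq_zero_of_premise hAs hA hneg (fun _ => hi₀) y (fun _ => by simp [hj]) hy hyinj
    by_cases hh : (⟨i₀, hi₀⟩ : M) ∈ heavy n M D C
    · have hset : ∀ i : M, i ∈ heavy n M D C ∨ (i : ℕ) = i₀ → i ∈ heavy n M D C := by
        rintro i (h | h)
        · exact h
        · obtain rfl : i = ⟨i₀, hi₀⟩ := Subtype.ext h
          exact hh
      exact key x (fun i hi => hx i (hset i hi)) (hinj.mono fun i hi => hset i hi)
    · refine hF x ⟨i₀, hi₀⟩ (openHoles n C i₀ \ (heavy n M D C).image x) ?_ fun j hj => ?_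
      · have h1 := Finset.le_card_sdiff ((heavy n M D C).image x) (openHoles n C i₀)
        have h2 := Finset.card_image_le (s := heavy n M D C) (f := x)
        have h3 := hℓ ⟨i₀, hi₀⟩
        rw [mem_heavy] at hh
        simp only at hh
        omega
      · rw [Finset.mem_sdiff] at hj
        have hup : ∀ i ∈ heavy n M D C, Function.update x ⟨i₀, hi₀⟩ j i = x i := by
          intro i hi
          exact Function.update_of_ne (fun e : i = ⟨i₀, hi₀⟩ => hh (e ▸ hi)) _ _
        have hself : ∀ i : M, (i : ℕ) = i₀ → Function.update x ⟨i₀, hi₀⟩ j i = j := by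
          intro i hi
          obtain rfl : i = ⟨i₀, hi₀⟩ := Subtype.ext hi
          simp
        have hfresh : ∀ i ∈ heavy n M D C, x i ≠ j := fun i hi e =>
          hj.2 (Finset.mem_image.mpr ⟨i, hi, e⟩)
        refine key _ ?_ ?_
        · rintro i (hi | hi)
          · rw [hup i hi]; exact hx i hi
          · rw [hself i hi, hi]; exact hj.1
        · rintro i (hi | hi) i' (hi' | hi') e
          · rw [hup i hi, hup i' hi'] at e; exact hinj hi hi' e
          · rw [hup i hi, hself i' hi'] at e; exact absurd e (hfresh i hi)
          · rw [hself i hi, hup i' hi'] at e; exact absurd e.symm (hfresh i' hi')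
          · exact Subtype.ext (hi.trans hi'.symm)
  · -- An unassigned pigeon: its positive literal is false, so the first premise is used.
    have hset : ∀ i : M, i ∈ heavy n M D C ∨ (i : ℕ) = i₀ → i ∈ heavy n M D C := by
      rintro i (h | h)
      · exact h
      · exact absurd (h ▸ i.2) hi₀
    exact eq_zero_of_premise hAs hA hneg (fun h => by simp at h) x (fun h => absurd h hi₀)
      (fun i hi => hx i (hset i hi)) (hinj.mono fun i hi => hset i hi)

end Invariant

/-! ### The lower bound -/

/-- The pigeons whose pigeon clause occurs in the refutation. -/
noncomputable def usedPigeons {m n : ℕ} (P : ResolutionProof (FWPHPneg m n)) : Finset ℕ :=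
  {i ∈ Icc 1 m | ∃ u, P.clause u = pigeonClause n i}

lemma card_usedPigeons_le {m n : ℕ} (hn : 1 ≤ n) (P : ResolutionProof (FWPHPneg m n)) :
    #(usedPigeons P) ≤ P.size := by
  classical
  have h : ∀ i ∈ usedPigeons P, ∃ u, P.clause u = pigeonClause n i := fun i hi =>
    (Finset.mem_filter.mp hi).2
  have : Nonempty (Fin P.size) := ⟨P.root⟩
  choose! g hg using h
  have hinj : Set.InjOn g (usedPigeons P : Set ℕ) := by
    intro i hi i' hi' e
    have hc : pigeonClause n i = pigeonClause n i' := by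
      rw [← hg i hi, ← hg i' hi', e]
    have : ((i, 1), true) ∈ pigeonClause n i' := by
      rw [← hc]; simp [pigeonClause, hn]
    simp only [pigeonClause, Finset.mem_image, Prod.mk.injEq] at this
    obtain ⟨_, _, ⟨h1, _⟩, _⟩ := this
    exact h1.symm
  calc #(usedPigeons P) ≤ #(Finset.univ : Finset (Fin P.size)) :=
        Finset.card_le_card_of_injOn g (fun _ _ => Finset.mem_univ _) hinj
    _ = P.size := by simp

lemma vanishesOn_initial {m n : ℕ} (P : ResolutionProof (FWPHPneg m n))
    {D : usedPigeons P → ℕ} (hD : ∀ i, 1 ≤ D i) {F : (usedPigeons P → ℕ) → ℚ} (u : Fin P.size)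
    (hu : P.clause u ∈ FWPHPneg m n) : VanishesOn n (usedPigeons P) D F (P.clause u) := by
  simp only [FWPHPneg, WPHPneg, Finset.mem_union, Finset.mem_image, Finset.mem_filter] at hu
  rcases hu with (⟨i, hi, e⟩ | ⟨⟨i₁, i₂, j⟩, ⟨_, hlt⟩, e⟩) | ⟨⟨i, j₁, j₂⟩, ⟨_, hlt⟩, e⟩
  · rw [← e]
    exact vanishesOn_pigeon i (Finset.mem_filter.mpr ⟨hi, u, e.symm⟩)
  · rw [← e]; exact vanishesOn_hole hD _ _ _ (ne_of_lt hlt)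
  · rw [← e]; exact vanishesOn_func hD _ _ _ (ne_of_lt hlt)

/-- Here `t = s + 1` levels and `w₀ = s (2 t + 1)` are used; the bound on `n` says that every
threshold `2 w (r i + 1)` with `w = 16 w₀` is below `n`, so that the empty clause has no heavy
pigeon. -/
theorem two_pow_le_size {m n s : ℕ} (hs : 1 ≤ s)
    (hn : 32 * (s * (2 * (s + 1) + 1)) * (s + 2) < n) (P : ResolutionProof (FWPHPneg m n)) :
    2 ^ s ≤ P.size := by
  classical
  by_contra hcon
  push Not at hcon
  set t := s + 1 with ht
  set w₀ := s * (2 * t + 1) with hw₀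
  have hw₀s : s ≤ w₀ := Nat.le_mul_of_pos_right _ (by omega)
  have hn1 : 1 ≤ n := by omega
  set M := usedPigeons P with hM
  have hMcard : Fintype.card M ≤ 2 ^ s := by
    rw [Fintype.card_coe]; exact (card_usedPigeons_le hn1 P).trans hcon.le
  set w := 16 * w₀ with hw
  have hwpos : 0 < 2 * w := by omega
  obtain ⟨r, hr, hfilter⟩ := exists_thresholds
    (fun (u : Fin P.size) (i : M) => #(openHoles n (P.clause u) i) ⌈/⌉ (2 * w)) s w₀
    (by omega) hMcard (by
      rw [Fintype.card_fin]
      exact hcon.le.trans (Nat.pow_le_pow_right (by norm_num) hw₀s))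
  simp only [ceilDiv_le_iff_le_smul hwpos, smul_eq_mul] at hfilter
  let D : M → ℕ := fun i => 2 * w * (r i + 1)
  let ℓ : M → ℕ := fun i => w * (2 * r i + 1)
  let I : Fin P.size → Finset M := fun u => heavy n M (fun i => 2 * w * r i) (P.clause u)
  let G : Fin P.size → M → Finset ℕ := fun u i =>
    if i ∈ I u then openHoles n (P.clause u) i else range (ℓ i)
  let Q : Finset (M → ℕ) := (Finset.univ.filter fun u => w₀ ≤ #(I u)).biUnion
    fun u => Fintype.piFinset (G u)
  have hℓpos : 0 < ∏ i, ℓ i := Finset.prod_pos fun i _ => by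
    simp only [ℓ]; exact Nat.mul_pos (by omega) (by omega)
  have hQ : #Q < ∏ i, ℓ i := by
    have h1 : 2 ^ s * #Q ≤ P.size * ∏ i, ℓ i := by
      calc 2 ^ s * #Q
          ≤ 2 ^ s * ∑ u ∈ Finset.univ.filter (fun u => w₀ ≤ #(I u)),
              #(Fintype.piFinset (G u)) := by gcongr; exact Finset.card_biUnion_le
        _ = ∑ u ∈ Finset.univ.filter (fun u => w₀ ≤ #(I u)), 2 ^ s * ∏ i, #(G u i) := by
            rw [Finset.mul_sum]; simp [Fintype.card_piFinset]
        _ ≤ ∑ u ∈ Finset.univ.filter (fun u => w₀ ≤ #(I u)), ∏ i, ℓ i := by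
            refine Finset.sum_le_sum fun u hu => ?_
            refine grid_card_mul_le s t w (by omega) r (fun i => (hr i).2) (I u)
              (Finset.mem_filter.mp hu).2 _ (fun i hi => ?_) (fun i hi => ?_)
            · simp only [G, if_pos hi]; exact mem_heavy.mp hi
            · simp only [G, if_neg hi, Finset.card_range]; exact le_rfl
        _ ≤ ∑ u : Fin P.size, ∏ i, ℓ i :=
            Finset.sum_le_sum_of_subset (Finset.filter_subset _ _)
        _ = P.size * ∏ i, ℓ i := by simp
    have h2 : P.size * ∏ i, ℓ i < 2 ^ s * ∏ i, ℓ i := Nat.mul_lt_mul_of_pos_right hcon hℓpos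
    exact Nat.lt_of_mul_lt_mul_left (h1.trans_lt h2)
  obtain ⟨F, hF, hFQ, x₀, hx₀⟩ := exists_vanishing ℓ Q hQ
  have hD1 : ∀ i, 1 ≤ D i := fun i => Nat.mul_pos hwpos (by omega)
  have hinv : ∀ k : ℕ, ∀ u : Fin P.size, (u : ℕ) = k → VanishesOn n M D F (P.clause u) := by
    intro k
    induction k using Nat.strong_induction_on with
    | _ k ih =>
      intro u huk
      rcases hfilter u with hu | hu
      · -- Many pigeons far below threshold: vanishing is built into `F`.
        have hIu : w₀ ≤ #(I u) := hu
        intro _ x hx _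
        have hsub : ∀ i ∈ I u, i ∈ heavy n M D (P.clause u) := by
          intro i hi
          rw [mem_heavy]
          exact (mem_heavy.mp hi).trans (Nat.mul_le_mul_left _ (Nat.le_succ _))
        refine hF.eq_zero_of_grid (G u) (fun y hy => hFQ y ?_) (Finset.univ \ I u) ?_ x ?_
        · exact Finset.mem_biUnion.mpr ⟨u, by simpa using hIu, Fintype.mem_piFinset.mpr hy⟩
        · intro i hi
          simp only [G, if_neg (Finset.mem_sdiff.mp hi).2, Finset.card_range]; exact le_rfl
        · intro i hi
          have hi' : i ∈ I u := by simpa using hi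
          simp only [G, if_pos hi']
          exact hx i (hsub i hi')
      · rcases hst : P.step u with _ | ⟨v, a, b⟩
        · exact vanishesOn_initial P hD1 u (ResolutionProof.step_axiom P u hst)
        · have hlt := P.step_lt u v a b hst
          refine vanishesOn_resolvent (w := w) hF (fun i => ?_) (P.step_res u v a b hst).2.2 hu
            (ih a (by omega) a rfl) (ih b (by omega) b rfl)
          simp only [ℓ, D]
          nlinarith
  refine hx₀ (hinv _ P.root rfl ?_ x₀ ?_ ?_)
  · have : P.clause P.root = ∅ := P.last_empty
    simp [this]
  all_goals
    have hroot : heavy n M D (P.clause P.root) = ∅ := by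
      refine Finset.eq_empty_of_forall_notMem fun i hi => ?_
      rw [mem_heavy] at hi
      have he : P.clause P.root = ∅ := P.last_empty
      have hall : openHoles n (P.clause P.root) i = Icc 1 n := by
        rw [he]; ext j; simp [mem_openHoles]
      rw [hall, Nat.card_Icc, Nat.add_sub_cancel] at hi
      have h1 : D i ≤ 2 * w * (s + 2) := Nat.mul_le_mul_left _ (by have := (hr i).2; omega)
      have h2 : 2 * w * (s + 2) = 32 * w₀ * (s + 2) := by rw [hw]; ring
      omega
    simp [hroot]

/-- Razborov: there are constants `ε > 0` and `c > 0` such that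
for every `n ≥ 1` and every `m ≥ n+1`, every Resolution refutation of the weak
functional pigeonhole principle CNF `¬FWPHP^m_n` has length at least `c · 2^{n^ε}`. -/
theorem razborov_functional_wphp_lower_bound :
    ∃ ε c : ℝ, 0 < ε ∧ 0 < c ∧ ∀ n : ℕ, 1 ≤ n → ∀ m : ℕ, n + 1 ≤ m →
      ∀ P : ResolutionProof (FWPHPneg m n),
        c * (2 : ℝ) ^ ((n : ℝ) ^ ε) ≤ (P.size : ℝ) := by
  refine ⟨1 / 4, (2 : ℝ) ^ (-(481 : ℝ)), by norm_num, by positivity, ?_⟩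
  intro n hn m _ P
  set a : ℝ := (n : ℝ) ^ (1 / 4 : ℝ) with ha
  have ha0 : 0 ≤ a := by positivity
  have ha4 : a ^ 4 = n := by
    rw [ha, ← Real.rpow_natCast, ← Real.rpow_mul (by positivity)]; norm_num
  rw [← Real.rpow_add (by norm_num)]
  by_cases hlarge : 481 ≤ a
  · have hsle : (⌊a⌋₊ : ℝ) ≤ a := Nat.floor_le ha0
    have hslt : a < ⌊a⌋₊ + 1 := Nat.lt_floor_add_one a
    set s := ⌊a⌋₊ with hs
    have hs1 : 1 ≤ s := by
      rw [hs]; apply Nat.le_floor; push_cast; linarith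
    have hn' : 32 * (s * (2 * (s + 1) + 1)) * (s + 2) < n := by
      have h1 : 32 * (s * (2 * (s + 1) + 1)) * (s + 2) < 481 * s ^ 3 := by
        have h2 : s ≤ s ^ 2 := Nat.le_self_pow (by norm_num) s
        have h3 : s ^ 2 ≤ s ^ 3 := Nat.pow_le_pow_right hs1 (by norm_num)
        calc 32 * (s * (2 * (s + 1) + 1)) * (s + 2)
            = 64 * s ^ 3 + 224 * s ^ 2 + 192 * s := by ring
          _ < 481 * s ^ 3 := by omega
      have h2 : 481 * s ^ 3 ≤ n := by
        have : (481 : ℝ) * s ^ 3 ≤ n := by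
          rw [← ha4]
          calc (481 : ℝ) * s ^ 3 ≤ a * a ^ 3 := by gcongr
            _ = a ^ 4 := by ring
        exact_mod_cast this
      omega
    have hsize := two_pow_le_size hs1 hn' P
    calc (2 : ℝ) ^ (-481 + a) ≤ (2 : ℝ) ^ (s : ℝ) :=
          Real.rpow_le_rpow_of_exponent_le (by norm_num) (by linarith)
      _ = ((2 ^ s : ℕ) : ℝ) := by rw [Real.rpow_natCast]; push_cast; rfl
      _ ≤ P.size := by exact_mod_cast hsize
  · push Not at hlarge
    calc (2 : ℝ) ^ (-481 + a) ≤ (2 : ℝ) ^ (0 : ℝ) :=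
          Real.rpow_le_rpow_of_exponent_le (by norm_num) (by linarith)
      _ = 1 := Real.rpow_zero _
      _ ≤ P.size := by exact_mod_cast P.size_pos
end

section
/- (Razborov) There exist constants ε > 0 and c > 0 such that for every n ≥ 1 and every m ≥ n+1, every Resolution refutation of the weak functional onto pigeonhole principle CNF ¬FOWPHP^m_n has length at least c · 2^{n^ε}. -/
open Finset

/-! ### Polynomials with bounded degree in each variable -/

section Grid
variable {V : Type} [Fintype V] [DecidableEq V]

/-- The polynomial function on `ℚ^V`, of degree less than `D v` in the variable `y v`, that takes
the prescribed values `g` on the integer grid `∏ v, {0, …, D v - 1}`, in its Lagrange form. Every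
polynomial with these degree bounds is of this form. -/
noncomputable def gridPoly (D : V → ℕ) (g : (∀ v, Fin (D v)) → ℚ) (y : V → ℚ) : ℚ :=
  ∑ x : (∀ v, Fin (D v)), g x *
    ∏ v, (Lagrange.basis (range (D v)) (fun k : ℕ => (k : ℚ)) (x v)).eval (y v)

lemma natCast_injOn (s : Set ℕ) : Set.InjOn (fun k : ℕ => (k : ℚ)) s :=
  Nat.cast_injective.injOn

lemma gridPoly_node (D : V → ℕ) (g : (∀ v, Fin (D v)) → ℚ) (x : ∀ v, Fin (D v)) :
    gridPoly D g (fun v => ((x v : ℕ) : ℚ)) = g x := by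
  unfold gridPoly
  rw [Finset.sum_eq_single x]
  · rw [Finset.prod_eq_one, mul_one]
    intro v _
    exact Lagrange.eval_basis_self (natCast_injOn _) (by simp)
  · intro z _ hz
    obtain ⟨v, hv⟩ := Function.ne_iff.1 hz
    rw [Finset.prod_eq_zero (mem_univ v), mul_zero]
    exact Lagrange.eval_basis_of_ne (v := fun k : ℕ => (k : ℚ))
      (by simpa [Fin.ext_iff] using hv) (by simp)
  · simp

/-- With all coordinates but one frozen, `gridPoly` is a univariate polynomial of degree less
than `D v`. -/
lemma gridPoly_coord (D : V → ℕ) (g : (∀ v, Fin (D v)) → ℚ) (y : V → ℚ) (v : V) :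
    ∃ p : Polynomial ℚ, p.degree < D v ∧
      ∀ a, gridPoly D g (Function.update y v a) = p.eval a := by
  refine ⟨∑ x : (∀ v, Fin (D v)), Polynomial.C (g x *
    ∏ w ∈ univ.erase v, (Lagrange.basis (range (D w)) (fun k : ℕ => (k : ℚ)) (x w)).eval (y w)) *
      Lagrange.basis (range (D v)) (fun k : ℕ => (k : ℚ)) (x v), ?_, ?_⟩
  · refine lt_of_le_of_lt (Polynomial.degree_sum_le _ _) ?_
    rw [Finset.sup_lt_iff (WithBot.bot_lt_coe _)]
    intro x _
    rw [← Polynomial.smul_eq_C_mul]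
    refine lt_of_le_of_lt (Polynomial.degree_smul_le _ _) ?_
    rw [Lagrange.degree_basis (natCast_injOn _) (by simp)]
    have := (x v).2
    simp only [card_range]
    exact_mod_cast (by omega : D v - 1 < D v)
  · intro a
    unfold gridPoly
    rw [Polynomial.eval_finsetSum]
    refine Finset.sum_congr rfl fun x _ => ?_
    rw [Polynomial.eval_mul, Polynomial.eval_C, mul_assoc,
      ← Finset.prod_erase_mul univ _ (mem_univ v)]
    congr 2
    · refine Finset.prod_congr rfl fun w hw => ?_
      rw [Function.update_of_ne (Finset.ne_of_mem_erase hw)]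
    · simp

/-- The space of polynomials has dimension `∏ v, D v`, so a nonzero one vanishes on any
smaller set of points. -/
lemma exists_gridPoly (D : V → ℕ) (Pts : Finset (V → ℚ)) (h : #Pts < ∏ v, D v) :
    ∃ g : (∀ v, Fin (D v)) → ℚ, (∃ y, gridPoly D g y ≠ 0) ∧ ∀ y ∈ Pts, gridPoly D g y = 0 := by
  let T : ((∀ v, Fin (D v)) → ℚ) →ₗ[ℚ] (Pts → ℚ) :=
    { toFun := fun g y => gridPoly D g y
      map_add' := fun g g' => by
        ext y; simp [gridPoly, add_mul, Finset.sum_add_distrib]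
      map_smul' := fun a g => by
        ext y; simp [gridPoly, Finset.mul_sum, mul_assoc] }
  have hk : LinearMap.ker T ≠ ⊥ := by
    apply LinearMap.ker_ne_bot_of_finrank_lt
    simpa using h
  obtain ⟨g, hg, hg0⟩ := (Submodule.ne_bot_iff _).1 hk
  obtain ⟨x, hx⟩ := Function.ne_iff.1 hg0
  refine ⟨g, ⟨fun v => ((x v : ℕ) : ℚ), by rw [gridPoly_node]; exact hx⟩, fun y hy => ?_⟩
  exact congrFun (LinearMap.mem_ker.1 hg) ⟨y, hy⟩

lemma poly_zero_of_card {p : Polynomial ℚ} {d : ℕ} (hd : p.degree < d) (B : Finset ℚ)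
    (hB : d ≤ #B) (h : ∀ b ∈ B, p.eval b = 0) : p = 0 :=
  Polynomial.eq_zero_of_degree_lt_of_eval_finset_eq_zero B
    (lt_of_lt_of_le hd (by exact_mod_cast hB)) h

/-- Vanishing on a box `∏ v, B v` extends to all values of every coordinate `v` whose side `B v`
has at least `D v` elements, since a univariate polynomial of degree less than `D v` with `D v` roots
is zero. -/
lemma gridPoly_vanish (D : V → ℕ) (g : (∀ v, Fin (D v)) → ℚ) (T : Finset V)
    (B : V → Finset ℚ) (hB : ∀ v ∉ T, D v ≤ #(B v))
    (h : ∀ y, (∀ v, y v ∈ B v) → gridPoly D g y = 0) :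
    ∀ y, (∀ v ∈ T, y v ∈ B v) → gridPoly D g y = 0 := by
  have key : ∀ X : Finset V, Disjoint X T →
      ∀ y, (∀ v ∉ X, y v ∈ B v) → gridPoly D g y = 0 := by
    intro X
    induction X using Finset.induction_on with
    | empty => intro _ y hy; exact h y fun v => hy v (by simp)
    | insert v X hv ih =>
      intro hd y hy
      rw [Finset.disjoint_insert_left] at hd
      obtain ⟨p, hp, hpe⟩ := gridPoly_coord D g y v
      have hp0 : p = 0 := by
        refine poly_zero_of_card hp (B v) (hB v hd.1) fun b hb => ?_
        rw [← hpe]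
        refine ih hd.2 _ fun w hw => ?_
        by_cases hwv : w = v
        · subst hwv; simpa using hb
        · rw [Function.update_of_ne hwv]
          exact hy w (by simp [hwv, hw])
      have := hpe (y v)
      simpa [hp0] using this
  intro y hy
  exact key (univ \ T) (Finset.sdiff_disjoint) y fun v hv => hy v (by simpa using hv)

/-- A family of boxes `{y | ∀ v ∈ T c, y v ∈ B c v}` is annihilated by a common nonzero
polynomial as soon as the total number of linear conditions `∏ v ∈ T c, #(B c v) * ∏ v ∉ T c, D v` is smaller than
the dimension `∏ v, D v`. The infinite sides of the boxes may be cut down to `D v` points by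
`gridPoly_vanish`. -/
lemma exists_gridPoly_boxes {ι : Type} (D : V → ℕ) (I : Finset ι)
    (T : ι → Finset V) (B : ι → V → Finset ℚ)
    (h : ∑ c ∈ I, (∏ v, if v ∈ T c then #(B c v) else D v) < ∏ v, D v) :
    ∃ g : (∀ v, Fin (D v)) → ℚ, (∃ y, gridPoly D g y ≠ 0) ∧
      ∀ c ∈ I, ∀ y, (∀ v ∈ T c, y v ∈ B c v) → gridPoly D g y = 0 := by
  classical
  let B' : ι → V → Finset ℚ := fun c v =>
    if v ∈ T c then B c v else (range (D v)).image (fun k : ℕ => (k : ℚ))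
  have hcard : ∀ v, #((range (D v)).image (fun k : ℕ => (k : ℚ))) = D v := fun v => by
    rw [Finset.card_image_of_injOn (natCast_injOn _), card_range]
  obtain ⟨g, hg, hv⟩ := exists_gridPoly D (I.biUnion fun c => Fintype.piFinset (B' c)) (by
    refine lt_of_le_of_lt (Finset.card_biUnion_le.trans (Finset.sum_le_sum fun c _ => ?_)) h
    rw [Fintype.card_piFinset]
    refine le_of_eq (Finset.prod_congr rfl fun v _ => ?_)
    by_cases hvT : v ∈ T c
    · simp [B', hvT]
    · simp only [B', hvT, if_false]; exact hcard v)
  refine ⟨g, hg, fun c hc y hy => ?_⟩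
  refine gridPoly_vanish D g (T c) (B' c) (fun v hvT => ?_) (fun y hy => ?_) y fun v hvT => ?_
  · simp only [B', hvT, if_false]; exact (hcard v).ge
  · exact hv y (Finset.mem_biUnion.2 ⟨c, hc, Fintype.mem_piFinset.2 hy⟩)
  · simpa [B', hvT] using hy v hvT
end Grid

/-! ### Finite product measures and the truncated geometric law -/

section Prob
variable {V : Type} [Fintype V] [DecidableEq V] {Ω : Type}

/-- The expectation of `f` when the coordinates `χ v`, `v : V`, are independent with weights `μ` on
the finite set `Om`. -/
noncomputable def mean (V : Type) [Fintype V] [DecidableEq V] (Om : Finset Ω) (μ : Ω → ℝ)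
    (f : (V → Ω) → ℝ) : ℝ :=
  ∑ χ ∈ Fintype.piFinset (fun _ : V => Om), (∏ v, μ (χ v)) * f χ

/-- The moment generating function bound behind Chernoff's inequality: if `X` is the number of
coordinates `v` for which the event `Q v` happens, then `E[z ^ X] ≤ exp ((z - 1) E[X])`. -/
lemma mean_pow_le (Om : Finset Ω) (μ : Ω → ℝ) (hμ : ∀ ω ∈ Om, 0 ≤ μ ω) (h1 : ∑ ω ∈ Om, μ ω = 1)
    (Q : V → Ω → Prop) [∀ v ω, Decidable (Q v ω)] (z : ℝ) (hz : 0 ≤ z) :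
    mean V Om μ (fun χ => z ^ #{v | Q v (χ v)}) ≤
      Real.exp ((z - 1) * ∑ v, ∑ ω ∈ Om with Q v ω, μ ω) := by
  have e1 : mean V Om μ (fun χ => z ^ #{v | Q v (χ v)}) =
      ∏ v : V, ∑ ω ∈ Om, μ ω * (if Q v ω then z else 1) := by
    rw [Finset.prod_univ_sum]
    unfold mean
    refine Finset.sum_congr rfl fun χ _ => ?_
    rw [Finset.prod_mul_distrib, Finset.prod_ite]
    simp
  rw [e1, Finset.mul_sum, Real.exp_sum]
  refine Finset.prod_le_prod (fun v _ => Finset.sum_nonneg fun ω hω => ?_) fun v _ => ?_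
  · exact mul_nonneg (hμ ω hω) (by split_ifs <;> linarith)
  · have : ∑ ω ∈ Om, μ ω * (if Q v ω then z else 1) =
        (z - 1) * (∑ ω ∈ Om with Q v ω, μ ω) + 1 := by
      trans (z - 1) * (∑ ω ∈ Om with Q v ω, μ ω) + ∑ ω ∈ Om, μ ω
      swap
      · rw [h1]
      rw [Finset.sum_filter, Finset.mul_sum, ← Finset.sum_add_distrib]
      refine Finset.sum_congr rfl fun ω _ => ?_
      split_ifs <;> ring
    rw [this]
    exact Real.add_one_le_exp _

lemma mean_add (Om : Finset Ω) (μ : Ω → ℝ) (f g : (V → Ω) → ℝ) :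
    mean V Om μ (fun χ => f χ + g χ) = mean V Om μ f + mean V Om μ g := by
  simp [mean, mul_add, Finset.sum_add_distrib]

lemma mean_div (Om : Finset Ω) (μ : Ω → ℝ) (f : (V → Ω) → ℝ) (a : ℝ) :
    mean V Om μ (fun χ => f χ / a) = mean V Om μ f / a := by
  simp only [mean, Finset.sum_div, mul_div_assoc]

lemma mean_sum {ι : Type} (Om : Finset Ω) (μ : Ω → ℝ) (s : Finset ι) (f : ι → (V → Ω) → ℝ) :
    mean V Om μ (fun χ => ∑ i ∈ s, f i χ) = ∑ i ∈ s, mean V Om μ (f i) := by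
  simp only [mean, Finset.mul_sum]
  rw [Finset.sum_comm]

lemma exists_of_mean_lt_one (Om : Finset Ω) (μ : Ω → ℝ) (hμ : ∀ ω ∈ Om, 0 ≤ μ ω)
    (h1 : ∑ ω ∈ Om, μ ω = 1) (f : (V → Ω) → ℝ) (h : mean V Om μ f < 1) :
    ∃ χ : V → Ω, (∀ v, χ v ∈ Om) ∧ f χ < 1 := by
  by_contra! hc
  have : (1 : ℝ) ≤ mean V Om μ f := by
    have e : (1 : ℝ) = ∑ χ ∈ Fintype.piFinset (fun _ : V => Om), (∏ v, μ (χ v)) := by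
      rw [← Finset.prod_univ_sum]; simp [h1]
    rw [e]
    refine Finset.sum_le_sum fun χ hχ => ?_
    rw [Fintype.mem_piFinset] at hχ
    exact le_mul_of_one_le_right (Finset.prod_nonneg fun v _ => hμ _ (hχ v)) (hc χ hχ)
  linarith

/-- The geometric law with ratio `1 / 2`, truncated at `t`: weight `2⁻¹, 2⁻², …, 2⁻ᵗ` on
`0, …, t - 1`, and the remaining `2⁻ᵗ` on `t`. -/
noncomputable def geo (t r : ℕ) : ℝ := if r < t then (1 / 2) ^ (r + 1) else (1 / 2) ^ t

lemma geo_nonneg (t r : ℕ) : 0 ≤ geo t r := by unfold geo; split_ifs <;> positivity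

lemma geo_sum (t : ℕ) : ∑ r ∈ range (t + 1), geo t r = 1 := by
  rw [Finset.sum_range_succ]
  have : ∀ k ≤ t, ∑ r ∈ range k, geo t r = 1 - (1 / 2) ^ k := by
    intro k hk
    induction k with
    | zero => simp
    | succ k ih =>
      rw [Finset.sum_range_succ, ih (by omega), geo, if_pos (by omega)]
      ring
  rw [this t le_rfl, geo, if_neg (lt_irrefl t)]
  ring

lemma geo_le (t r : ℕ) (h : r < t) : geo t r ≤ 2 * geo t (r + 1) := by
  unfold geo
  rw [if_pos h]
  split_ifs with h2
  · rw [pow_succ _ (r + 1)]; linarith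
  · obtain rfl : t = r + 1 := by omega
    have : (0 : ℝ) < (1 / 2) ^ (r + 1) := by positivity
    linarith

/-- Raising the threshold by one at most halves its probability, except at the truncation point,
which has probability `2⁻ᵗ`. -/
lemma geo_shift (t : ℕ) (X Y : ℕ → Prop) [DecidablePred X] [DecidablePred Y]
    (h : ∀ r, X r → Y (r + 1)) :
    ∑ r ∈ range (t + 1) with X r, geo t r ≤
      2 * (∑ r ∈ range (t + 1) with Y r, geo t r) + (1 / 2) ^ t := by
  rw [Finset.sum_filter, Finset.sum_filter, Finset.sum_range_succ]
  have hl : (if X t then geo t t else 0) ≤ (1 / 2) ^ t := by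
    split_ifs
    · simp [geo]
    · positivity
  have h2 : ∑ r ∈ range t, (if X r then geo t r else 0) ≤
      2 * ∑ r ∈ range t, (if Y (r + 1) then geo t (r + 1) else 0) := by
    rw [Finset.mul_sum]
    refine Finset.sum_le_sum fun r hr => ?_
    by_cases hX : X r
    · simpa [hX, h r hX] using geo_le t r (by simpa using hr)
    · simp only [hX, if_false]
      split_ifs <;> simp [geo_nonneg]
  have h3 : ∑ r ∈ range t, (if Y (r + 1) then geo t (r + 1) else 0) ≤
      ∑ r ∈ range (t + 1), (if Y r then geo t r else 0) := by
    rw [Finset.sum_range_succ']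
    have : 0 ≤ (if Y 0 then geo t 0 else 0) := by split_ifs <;> simp [geo_nonneg]
    linarith
  linarith
end Prob

/-! ### The adversary argument -/

section Game
variable {V : Type} [Fintype V] [DecidableEq V]

/-- A partial matching between the two colour classes of `side`, encoded as an involution that
fixes exactly the uncovered vertices and sends a covered vertex to its partner. -/
def IsMatching (side : V → Bool) (φ : V → V) : Prop :=
  ∀ v, φ (φ v) = v ∧ (φ v ≠ v → side (φ v) ≠ side v)

/-- No edge of the matching `φ` belongs to `E`. -/
def Avoids (φ : V → V) (E : V → V → Prop) : Prop := ∀ v, φ v ≠ v → ¬ E v (φ v)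

open Classical in
/-- The vertices on the other side that can be matched to `v` without using an edge of `E`. -/
noncomputable def freeNbrs (side : V → Bool) (E : V → V → Prop) (v : V) : Finset V :=
  {u | side u ≠ side v ∧ ¬ E v u}

/-- The polynomial `gridPoly D g` does not vanish identically after the substitution `y v = emb (φ v)`
for the covered vertices `v` of `L`. -/
def Alive (D : V → ℕ) (g : (∀ v, Fin (D v)) → ℚ) (emb : V → ℚ) (L : Finset V)
    (φ : V → V) : Prop :=
  ∃ y, gridPoly D g y ≠ 0 ∧ ∀ v ∈ L, φ v ≠ v → y v = emb (φ v)

/-- An uncovered vertex `v` with enough free neighbours can be matched while the polynomial stays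
nonzero: at least `D v` free neighbours are uncovered and outside `L`, and a nonzero polynomial of
degree less than `D v` in `y v` survives the substitution of one of them. As the partner lies outside
`L`, no other coordinate is fixed. -/
lemma extend_one (side : V → Bool) (E : V → V → Prop) (hsymm : ∀ v u, E v u → E u v)
    (D : V → ℕ) (g : (∀ v, Fin (D v)) → ℚ) (emb : V → ℚ) (hemb : Function.Injective emb)
    (L : Finset V) (φ : V → V) (hφ : IsMatching side φ) (hav : Avoids φ E)
    (hal : Alive D g emb L φ) (v : V) (hv : φ v = v) (l k : ℕ) (hD : 0 < D v)
    (hl : #{u ∈ L | side u ≠ side v} ≤ l) (hk : #{u | φ u ≠ u} ≤ k)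
    (hfree : D v + l + k ≤ #(freeNbrs side E v)) :
    ∃ φ', IsMatching side φ' ∧ Avoids φ' E ∧ Alive D g emb L φ' ∧
      (∀ u, φ u ≠ u → φ' u ≠ u) ∧ φ' v ≠ v ∧ #{u | φ' u ≠ u} ≤ k + 2 := by
  obtain ⟨y, hy, hyL⟩ := hal
  -- partners outside `L` that are still unmatched
  set Av : Finset V := (freeNbrs side E v \ {u ∈ L | side u ≠ side v}) \
    ({u | φ u ≠ u} : Finset V) with hAv
  have hcard : D v ≤ #Av := by
    have h1 := Finset.le_card_sdiff {u | φ u ≠ u} (freeNbrs side E v \ {u ∈ L | side u ≠ side v})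
    have h2 := Finset.le_card_sdiff {u ∈ L | side u ≠ side v} (freeNbrs side E v)
    rw [hAv]
    omega
  have hAvmem : ∀ u ∈ Av, side u ≠ side v ∧ ¬ E v u ∧ u ∉ L ∧ φ u = u := by
    intro u hu
    simp only [hAv, freeNbrs, mem_sdiff, mem_filter, mem_univ, true_and, not_and, not_not] at hu
    obtain ⟨⟨⟨h1, h2⟩, h3⟩, h4⟩ := hu
    exact ⟨h1, h2, fun h => h1 (h3 h), h4⟩
  obtain ⟨u, hu, y', hy', hy'v, hy'w⟩ : ∃ u ∈ Av, ∃ y', gridPoly D g y' ≠ 0 ∧ y' v = emb u ∧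
      ∀ w, w ≠ v → y' w = y w := by
    obtain ⟨p, hp, hpe⟩ := gridPoly_coord D g y v
    have : ∃ u ∈ Av, p.eval (emb u) ≠ 0 := by
      by_contra! hc
      have hp0 := poly_zero_of_card hp (Av.image emb)
        (by rwa [Finset.card_image_of_injective _ hemb]) (by simpa using hc)
      have := hpe (y v)
      rw [Function.update_eq_self, hp0] at this
      exact hy (by simpa using this)
    obtain ⟨u, hu, hpu⟩ := this
    refine ⟨u, hu, Function.update y v (emb u), by rwa [hpe], by simp, fun w hw => ?_⟩
    rw [Function.update_of_ne hw]
  obtain ⟨hs, hE, huL, hfix⟩ := hAvmem u hu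
  have huv : u ≠ v := fun h => hs (by rw [h])
  let φ' : V → V := fun w => if w = v then u else if w = u then v else φ w
  have fv : φ' v = u := by simp [φ']
  have fu : φ' u = v := by simp [φ', huv]
  have fo : ∀ w, w ≠ v → w ≠ u → φ' w = φ w := fun w h1 h2 => by simp [φ', h1, h2]
  have inv : ∀ w, w ≠ v → w ≠ u → φ w ≠ v ∧ φ w ≠ u := by
    intro w h1 h2
    refine ⟨fun h => h1 ?_, fun h => h2 ?_⟩
    · rw [← (hφ w).1, h, hv]
    · rw [← (hφ w).1, h, hfix]
  refine ⟨φ', fun w => ?_, fun w => ?_, ⟨y', hy', fun w hw => ?_⟩, fun w hw => ?_, ?_, ?_⟩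
  · by_cases h1 : w = v
    · subst h1; rw [fv, fu]; exact ⟨rfl, fun _ => hs⟩
    by_cases h2 : w = u
    · subst h2; rw [fu, fv]; exact ⟨rfl, fun _ => hs.symm⟩
    rw [fo w h1 h2, fo _ (inv w h1 h2).1 (inv w h1 h2).2]
    exact hφ w
  · by_cases h1 : w = v
    · subst h1; rw [fv]; exact fun _ => hE
    by_cases h2 : w = u
    · subst h2; rw [fu]; exact fun _ h => hE (hsymm _ _ h)
    rw [fo w h1 h2]; exact hav w
  · by_cases h1 : w = v
    · subst h1; rw [fv]; exact fun _ => hy'v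
    by_cases h2 : w = u
    · subst h2; exact absurd hw huL
    rw [fo w h1 h2, hy'w w h1]; exact hyL w hw
  · rw [fo w (fun h => hw (h ▸ hv)) (fun h => hw (h ▸ hfix))]; exact hw
  · rw [fv]; exact huv
  · have hsub : ({w | φ' w ≠ w} : Finset V) ⊆ ({w | φ w ≠ w} : Finset V) ∪ {v, u} := by
      intro w hw
      simp only [mem_filter, mem_univ, true_and, mem_union, mem_insert, mem_singleton] at hw ⊢
      by_cases h1 : w = v
      · simp [h1]
      by_cases h2 : w = u
      · simp [h2]
      rw [fo w h1 h2] at hw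
      exact Or.inl hw
    have h2 : #({v, u} : Finset V) ≤ 2 := Finset.card_le_two
    have h3 := Finset.card_le_card hsub
    have h4 := Finset.card_union_le ({w | φ w ≠ w} : Finset V) {v, u}
    omega

/-- Iteration of `extend_one`: all of `X` can be covered in addition to `T`, provided every vertex
outside `T` has enough free neighbours. -/
lemma extend_many (side : V → Bool) (E : V → V → Prop) (hsymm : ∀ v u, E v u → E u v)
    (D : V → ℕ) (hD : ∀ v, 0 < D v) (g : (∀ v, Fin (D v)) → ℚ) (emb : V → ℚ)
    (hemb : Function.Injective emb) (L : Finset V) (l : V → ℕ)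
    (hl : ∀ v, #{u ∈ L | side u ≠ side v} ≤ l v) (T : Finset V) (k₀ K : ℕ)
    (hfree : ∀ v ∉ T, D v + l v + K ≤ #(freeNbrs side E v))
    (φ : V → V) (hφ : IsMatching side φ) (hav : Avoids φ E)
    (hal : Alive D g emb L φ) (hT : ∀ v ∈ T, φ v ≠ v) (hk : #{u | φ u ≠ u} ≤ k₀)
    (X : Finset V) (hX : k₀ + 2 * #X ≤ K) :
    ∃ φ', IsMatching side φ' ∧ Avoids φ' E ∧ Alive D g emb L φ' ∧
      (∀ u ∈ T ∪ X, φ' u ≠ u) ∧ #{u | φ' u ≠ u} ≤ k₀ + 2 * #X := by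
  induction X using Finset.induction_on with
  | empty => exact ⟨φ, hφ, hav, hal, by simpa using hT, by simpa using hk⟩
  | insert v X hv ih =>
    rw [Finset.card_insert_of_notMem hv] at hX ⊢
    obtain ⟨φ₁, h1, h2, h3, h4, h5⟩ := ih (by omega)
    by_cases hc : φ₁ v = v
    · have hvT : v ∉ T := fun h => h4 v (by simp [h]) hc
      obtain ⟨φ₂, g1, g2, g3, g4, g5, g6⟩ := extend_one side E hsymm D g emb hemb L φ₁ h1 h2 h3 v hc
        (l v) (k₀ + 2 * #X) (hD v) (hl v) h5 (le_trans (by omega) (hfree v hvT))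
      refine ⟨φ₂, g1, g2, g3, fun u hu => ?_, by omega⟩
      by_cases huv : u = v
      · rw [huv]; exact g5
      · exact g4 u (h4 u (by simpa [huv] using hu))
    · refine ⟨φ₁, h1, h2, h3, fun u hu => ?_, by omega⟩
      by_cases huv : u = v
      · rw [huv]; exact hc
      · exact h4 u (by simpa [huv] using hu)

/-- Only the edges that meet `T` need to be kept in a matching covering `T`. -/
lemma restrict_matching (side : V → Bool) (E : V → V → Prop)
    (D : V → ℕ) (g : (∀ v, Fin (D v)) → ℚ) (emb : V → ℚ) (L : Finset V)
    (φ : V → V) (hφ : IsMatching side φ) (hav : Avoids φ E)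
    (hal : Alive D g emb L φ) (T : Finset V) (hT : ∀ v ∈ T, φ v ≠ v) :
    ∃ φ', IsMatching side φ' ∧ Avoids φ' E ∧ Alive D g emb L φ' ∧
      (∀ u ∈ T, φ' u ≠ u) ∧ #{u | φ' u ≠ u} ≤ 2 * #T := by
  let φ' : V → V := fun v => if v ∈ T ∨ φ v ∈ T then φ v else v
  have hc : ∀ v, φ' v ≠ v → φ' v = φ v ∧ (v ∈ T ∨ φ v ∈ T) := by
    intro v
    simp only [φ']
    split_ifs with h
    · exact fun _ => ⟨rfl, h⟩
    · exact fun h => absurd rfl h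
  refine ⟨φ', fun v => ⟨?_, fun h => ?_⟩, fun v h => ?_, ?_, fun v hv => ?_, ?_⟩
  · by_cases h : v ∈ T ∨ φ v ∈ T
    · have h' : φ v ∈ T ∨ φ (φ v) ∈ T := by rw [(hφ v).1]; exact h.symm
      simp only [φ', if_pos h, if_pos h']
      exact (hφ v).1
    · simp only [φ', if_neg h]
  · have := (hc v h).1
    rw [this] at h ⊢
    exact (hφ v).2 h
  · have := (hc v h).1
    rw [this] at h ⊢
    exact hav v h
  · obtain ⟨y, hy, hyL⟩ := hal
    refine ⟨y, hy, fun v hv h => ?_⟩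
    have := (hc v h).1
    rw [this] at h ⊢
    exact hyL v hv h
  · simp only [φ', hv, true_or, if_true]; exact hT v hv
  · have hsub : ({u | φ' u ≠ u} : Finset V) ⊆ T ∪ T.image φ := by
      intro v hv
      simp only [mem_filter, mem_univ, true_and] at hv
      rcases (hc v hv).2 with h | h
      · exact Finset.mem_union_left _ h
      · exact Finset.mem_union_right _ (Finset.mem_image.2 ⟨φ v, h, (hφ v).1⟩)
    have h1 := Finset.card_le_card hsub
    have h2 := Finset.card_union_le T (T.image φ)
    have h3 : #(T.image φ) ≤ #T := Finset.card_image_le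
    omega

/-- What is retained of a resolution derivation of `S` clauses: `E c` is the set of edges that satisfy
clause `c`. An initial clause has a vertex all of whose edges satisfy it; for any other clause, a
matching that avoids its edges avoids those of one of the two premises, which come earlier. -/
structure MatchingDerivation (side : V → Bool) (S : ℕ) (E : Fin S → V → V → Prop) : Prop where
  symm : ∀ c v u, E c v u → E c u v
  step : ∀ c, (∃ v, ∀ u, side u ≠ side v → E c v u) ∨
    ∃ a b, a < c ∧ b < c ∧ ∀ φ, IsMatching side φ → Avoids φ (E c) →
      Avoids φ (E a) ∨ Avoids φ (E b)

/-- The adversary strategy. Descend from the root, keeping a matching `φ` that covers `T c`, avoids the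
edges satisfying the current clause `c`, and leaves the polynomial alive. At a resolution step `φ` is
extended to cover `T a ∪ T b` and then restricted to the set of the chosen premise. The descent never
terminates: an initial clause has a vertex without free neighbours, which must lie in `T c` and is matched
along an edge satisfying the clause, and at a clause of `Fat` the polynomial vanishes. The sizes fit
because `φ` covers at most `2 * K` vertices and covering `T a ∪ T b` adds at most `4 * K`. -/
lemma game_false (side : V → Bool) (S : ℕ) (E : Fin S → V → V → Prop)
    (hder : MatchingDerivation side S E) (root : Fin S) (hroot : ∀ v u, ¬ E root v u)
    (D : V → ℕ) (hD : ∀ v, 0 < D v) (g : (∀ v, Fin (D v)) → ℚ) (hg : ∃ y, gridPoly D g y ≠ 0)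
    (emb : V → ℚ) (hemb : Function.Injective emb) (L : Finset V) (l : V → ℕ)
    (hl : ∀ v, #{u ∈ L | side u ≠ side v} ≤ l v) (T : Fin S → Finset V) (K : ℕ)
    (hTK : ∀ c, #(T c) ≤ K) (hTroot : T root = ∅) (Fat : Fin S → Prop)
    (hfree : ∀ c, ¬ Fat c → ∀ v ∉ T c, D v + l v + 6 * K ≤ #(freeNbrs side (E c) v))
    (hfat : ∀ c, Fat c → T c ⊆ L ∧ ∀ y, (∀ v ∈ T c, y v ∈ (freeNbrs side (E c) v).image emb) →
      gridPoly D g y = 0) : False := by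
  have key : ∀ N : ℕ, ∀ c : Fin S, (c : ℕ) < N → ¬ ∃ φ, IsMatching side φ ∧ Avoids φ (E c) ∧
      Alive D g emb L φ ∧ (∀ u ∈ T c, φ u ≠ u) ∧ #{u | φ u ≠ u} ≤ 2 * K := by
    intro N
    induction N with
    | zero => intro c hc; omega
    | succ N ih =>
      rintro c hc ⟨φ, h1, h2, h3, h4, h5⟩
      by_cases hF : Fat c
      · obtain ⟨y, hy, hyL⟩ := h3
        obtain ⟨hTL, hz⟩ := hfat c hF
        refine hy (hz y fun v hv => ?_)
        rw [hyL v (hTL hv) (h4 v hv)]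
        refine Finset.mem_image_of_mem _ ?_
        simp only [freeNbrs, mem_filter, mem_univ, true_and]
        exact ⟨(h1 v).2 (h4 v hv), h2 v (h4 v hv)⟩
      rcases hder.step c with ⟨v, hv⟩ | ⟨a, b, hac, hbc, hab⟩
      · -- a vertex all of whose edges satisfy the clause must be covered
        by_cases hvT : v ∈ T c
        · exact h2 v (h4 v hvT) (hv _ ((h1 v).2 (h4 v hvT)))
        · have := hfree c hF v hvT
          have h0 : freeNbrs side (E c) v = ∅ := by
            ext u
            simp only [freeNbrs, mem_filter, mem_univ, true_and, notMem_empty, iff_false, not_and,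
              not_not]
            exact hv u
          rw [h0, card_empty] at this
          have := hD v
          omega
      · have hX : #(T a ∪ T b) ≤ 2 * K := by
          have := Finset.card_union_le (T a) (T b)
          have := hTK a
          have := hTK b
          omega
        obtain ⟨φ', g1, g2, g3, g4, -⟩ := extend_many side (E c) (hder.symm c) D hD g emb hemb L l hl
          (T c) (2 * K) (6 * K) (hfree c hF) φ h1 h2 h3 h4 h5 (T a ∪ T b) (by omega)
        rcases hab φ' g1 g2 with h | h
        · obtain ⟨φ'', k1, k2, k3, k4, k5⟩ := restrict_matching side (E a) D g emb L φ' g1 h g3 (T a)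
            fun v hv => g4 v (by simp [hv])
          exact ih a (by have : (a : ℕ) < c := hac; omega)
            ⟨φ'', k1, k2, k3, k4, by have := hTK a; omega⟩
        · obtain ⟨φ'', k1, k2, k3, k4, k5⟩ := restrict_matching side (E b) D g emb L φ' g1 h g3 (T b)
            fun v hv => g4 v (by simp [hv])
          exact ih b (by have : (b : ℕ) < c := hbc; omega)
            ⟨φ'', k1, k2, k3, k4, by have := hTK b; omega⟩
  refine key (root + 1) root (by omega) ⟨id, fun v => by simp, fun v _ => hroot _ _, ?_, ?_, ?_⟩
  · obtain ⟨y, hy⟩ := hg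
    exact ⟨y, hy, fun v _ h => absurd rfl h⟩
  · simp [hTroot]
  · simp
end Game

/-! ### Random thresholds and random sampling -/

section Filter
variable {V : Type} [Fintype V]

/-- A clause is called fat if its expected number of heavy vertices (`expHeavy`) is at least
`fatBound t`, and thin otherwise. -/
def fatBound (t : ℕ) : ℕ := 32 * (t + 1) * (2 * t + 1) * (2 * t + 4)

/-- The bound on the number of vertices that the adversary keeps covered at a clause. -/
def coverBound (t : ℕ) : ℕ := 4 * fatBound t + 5 + t

/-- The joint law of the random choices made at one vertex: a threshold with the truncated geometric
law and, independently, whether the vertex is sampled, with probability `1 / (32 (t + 1))`. -/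
noncomputable def law (t : ℕ) (ω : ℕ × Bool) : ℝ :=
  geo t ω.1 * (if ω.2 then 1 / (32 * ((t : ℝ) + 1)) else 1 - 1 / (32 * ((t : ℝ) + 1)))

/-- The support of `law t`. -/
def outcomes (t : ℕ) : Finset (ℕ × Bool) := range (t + 1) ×ˢ univ

lemma sampling_prob_bounds (t : ℕ) :
    0 < 1 / (32 * ((t : ℝ) + 1)) ∧ 1 / (32 * ((t : ℝ) + 1)) ≤ 1 := by
  refine ⟨by positivity, ?_⟩
  rw [div_le_one (by positivity)]
  have : (0 : ℝ) ≤ t := Nat.cast_nonneg t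
  linarith

lemma law_nonneg (t : ℕ) (ω : ℕ × Bool) : 0 ≤ law t ω := by
  have := sampling_prob_bounds t
  unfold law
  refine mul_nonneg (geo_nonneg _ _) ?_
  split_ifs <;> linarith [this.1, this.2]

lemma law_sum_level (t : ℕ) (X : ℕ → Prop) [DecidablePred X] :
    ∑ ω ∈ outcomes t with X ω.1, law t ω = ∑ r ∈ range (t + 1) with X r, geo t r := by
  rw [Finset.sum_filter, Finset.sum_filter, outcomes, Finset.sum_product]
  refine Finset.sum_congr rfl fun r _ => ?_
  by_cases h : X r
  · simp only [h, if_true, law, Fintype.sum_bool, Bool.false_eq_true, if_false]; ring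
  · simp [h]

lemma law_sum_sampled (t : ℕ) (X : ℕ → Prop) [DecidablePred X] :
    ∑ ω ∈ outcomes t with X ω.1 ∧ ω.2 = true, law t ω =
      1 / (32 * ((t : ℝ) + 1)) * ∑ r ∈ range (t + 1) with X r, geo t r := by
  rw [Finset.sum_filter, Finset.sum_filter, outcomes, Finset.sum_product, Finset.mul_sum]
  refine Finset.sum_congr rfl fun r _ => ?_
  by_cases h : X r
  · simp [h, law]; ring
  · simp [h]

lemma law_sum (t : ℕ) : ∑ ω ∈ outcomes t, law t ω = 1 := by
  have := law_sum_level t (fun _ => True)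
  simpa [geo_sum] using this

lemma exp_nat_le (k : ℕ) : Real.exp k ≤ 2 ^ (2 * k) := by
  have h : Real.exp 1 ≤ 2 ^ 2 := by
    have := Real.exp_one_lt_d9
    norm_num; linarith
  rw [pow_mul, ← Real.exp_one_pow]
  exact pow_le_pow_left₀ (Real.exp_pos _).le h k

lemma exp_neg_nat_le (k : ℕ) : Real.exp (-(k : ℝ)) ≤ (1 / 2) ^ k := by
  have h : (2 : ℝ) ≤ Real.exp 1 := by
    have := Real.exp_one_gt_d9
    linarith
  rw [Real.exp_neg, ← Real.exp_one_pow, one_div, inv_pow]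
  exact inv_anti₀ (by positivity) (pow_le_pow_left₀ (by norm_num) h k)

/-- The expected number of vertices `v` that are heavy, that is `a v ≤ 2 * r v * h v` for a random
threshold `r v`. Here `a v` stands for the number of free neighbours of `v` for some clause. -/
noncomputable def expHeavy (t : ℕ) (h a : V → ℕ) : ℝ :=
  ∑ v, ∑ r ∈ range (t + 1) with a v ≤ 2 * r * h v, geo t r

/-- The number of vertices that are heavy or close to heavy is, in expectation, at most twice the
number of heavy ones plus one: passing from threshold `r` to `r + 1` costs a factor two. -/
lemma expLoose_le (t : ℕ) (h a : V → ℕ) (hV : Fintype.card V ≤ 2 ^ t) :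
    ∑ v, ∑ r ∈ range (t + 1) with a v < 2 * (r + 1) * h v, geo t r ≤ 2 * expHeavy t h a + 1 := by
  have h1 : ∑ v, ∑ r ∈ range (t + 1) with a v < 2 * (r + 1) * h v, geo t r ≤
      ∑ v, (2 * (∑ r ∈ range (t + 1) with a v ≤ 2 * r * h v, geo t r) + (1 / 2) ^ t) :=
    Finset.sum_le_sum fun v _ => geo_shift t (fun r => a v < 2 * (r + 1) * h v)
      (fun r => a v ≤ 2 * r * h v) fun r hr => le_of_lt hr
  refine h1.trans ?_
  rw [Finset.sum_add_distrib, ← Finset.mul_sum, expHeavy, Finset.sum_const, card_univ, nsmul_eq_mul]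
  have : (Fintype.card V : ℝ) * (1 / 2) ^ t ≤ 1 := by
    have h2 : (Fintype.card V : ℝ) ≤ 2 ^ t := by exact_mod_cast hV
    rw [one_div, inv_pow, ← div_eq_mul_inv, div_le_one (by positivity)]
    exact h2
  linarith

variable [DecidableEq V]

/-- Some choice of thresholds `r` and sampled set `L` works for all clauses at once: `L` is small on
each side, every fat clause has many sampled heavy vertices, and every thin clause has few vertices
that are heavy or close to heavy. Each condition fails with small probability by a Chernoff bound; the
functions `f₁`, `f₂`, `f₃` are the corresponding exponential moments, of total mean less than one. -/
lemma filter_lemma (side : V → Bool) (S t : ℕ) (hS : S ≤ 2 ^ t) (hV : Fintype.card V ≤ 2 ^ t)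
    (h : V → ℕ) (a : Fin S → V → ℕ) (lb : Bool → ℕ) (hlb : ∀ b, 7 ≤ lb b)
    (hn : ∀ b, #{v | side v = b} < 4 * (t + 1) * (lb b + 1)) :
    ∃ (r : V → ℕ) (L : Finset V), (∀ v, r v ≤ t) ∧ (∀ b, #{v ∈ L | side v = b} ≤ lb b) ∧
      (∀ c, (fatBound t : ℝ) ≤ expHeavy t h (a c) →
        (1 - 1 / (2 * (t : ℝ) + 1)) ^ #{v ∈ L | a c v ≤ 2 * r v * h v} ≤ (1 / 2) ^ (t + 1)) ∧
      (∀ c, ¬ (fatBound t : ℝ) ≤ expHeavy t h (a c) →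
        #{v | a c v < 2 * (r v + 1) * h v} ≤ coverBound t) := by
  set p : ℝ := 1 / (32 * ((t : ℝ) + 1)) with hp
  set η : ℝ := 1 / (2 * (t : ℝ) + 1) with hη
  have hη1 : η ≤ 1 := by
    rw [hη, div_le_one (by positivity)]
    have : (0 : ℝ) ≤ t := Nat.cast_nonneg t
    linarith
  let f₁ : Bool → (V → ℕ × Bool) → ℝ := fun b χ =>
    2 ^ #{v | side v = b ∧ (χ v).2 = true} / 2 ^ lb b
  let f₂ : Fin S → (V → ℕ × Bool) → ℝ := fun c χ =>
    (1 - η) ^ #{v | a c v ≤ 2 * (χ v).1 * h v ∧ (χ v).2 = true} / (1 / 2) ^ (t + 1)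
  let f₃ : Fin S → (V → ℕ × Bool) → ℝ := fun c χ =>
    2 ^ #{v | a c v < 2 * ((χ v).1 + 1) * h v} / 2 ^ coverBound t
  set Fat : Finset (Fin S) := {c | (fatBound t : ℝ) ≤ expHeavy t h (a c)} with hFat
  have m₁ : ∀ b, mean V (outcomes t) (law t) (f₁ b) ≤ 1 / 8 := by
    intro b
    have h0 := mean_pow_le (V := V) (outcomes t) (law t) (fun ω _ => law_nonneg t ω) (law_sum t)
      (fun v ω => side v = b ∧ ω.2 = true) 2 (by norm_num)
    have e : ∑ v, ∑ ω ∈ outcomes t with side v = b ∧ ω.2 = true, law t ω =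
        #{v | side v = b} * p := by
      rw [Finset.card_filter, Nat.cast_sum, Finset.sum_mul]
      refine Finset.sum_congr rfl fun v _ => ?_
      by_cases hb : side v = b
      · have := law_sum_sampled t (fun _ => True)
        simp only [true_and, Finset.filter_true, geo_sum, mul_one] at this
        simp [hb, this, hp]
      · simp [hb]
    rw [mean_div, div_le_iff₀ (by positivity)]
    refine h0.trans ?_
    rw [e]
    have hle : (2 - 1) * (#{v | side v = b} * p) ≤ ((lb b / 4 : ℕ) : ℝ) := by
      have h1 : (#{v | side v = b} : ℝ) ≤ 4 * (t + 1) * (lb b + 1) := by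
        exact_mod_cast (hn b).le
      have h2 : ((lb b : ℝ) + 1) ≤ 8 * ((lb b / 4 : ℕ) : ℝ) := by
        have := hlb b
        exact_mod_cast (by omega : lb b + 1 ≤ 8 * (lb b / 4))
      have h3 : (0 : ℝ) < t + 1 := by positivity
      rw [hp, mul_one_div, show (2 - 1 : ℝ) = 1 by norm_num, one_mul, div_le_iff₀ (by positivity)]
      nlinarith
    refine (Real.exp_le_exp.2 hle).trans ((exp_nat_le _).trans ?_)
    have h4 : (2 : ℝ) ^ (2 * (lb b / 4) + 3) ≤ 2 ^ lb b := by
      have := hlb b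
      exact pow_le_pow_right₀ (by norm_num) (by omega)
    rw [pow_add] at h4
    linarith
  have m₂ : ∀ c ∈ Fat, mean V (outcomes t) (law t) (f₂ c) ≤ (1 / 8) / 2 ^ t := by
    intro c hc
    have hc' : (fatBound t : ℝ) ≤ expHeavy t h (a c) := by simpa [hFat] using hc
    have h0 := mean_pow_le (V := V) (outcomes t) (law t) (fun ω _ => law_nonneg t ω) (law_sum t)
      (fun v ω => a c v ≤ 2 * ω.1 * h v ∧ ω.2 = true) (1 - η) (by linarith)
    have e : ∑ v, ∑ ω ∈ outcomes t with a c v ≤ 2 * ω.1 * h v ∧ ω.2 = true, law t ω =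
        p * expHeavy t h (a c) := by
      rw [expHeavy, Finset.mul_sum]
      refine Finset.sum_congr rfl fun v _ => ?_
      exact law_sum_sampled t (fun r => a c v ≤ 2 * r * h v)
    rw [mean_div, div_le_iff₀ (by positivity)]
    refine h0.trans ?_
    rw [e]
    have hle : (1 - η - 1) * (p * expHeavy t h (a c)) ≤ -((2 * t + 4 : ℕ) : ℝ) := by
      have h1 : η * p * fatBound t = ((2 * t + 4 : ℕ) : ℝ) := by
        rw [hη, hp, fatBound]; push_cast; field_simp
      have h2 : η * p * fatBound t ≤ η * p * expHeavy t h (a c) :=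
        mul_le_mul_of_nonneg_left hc' (by positivity)
      rw [h1] at h2
      linarith
    refine (Real.exp_le_exp.2 hle).trans ((exp_neg_nat_le _).trans (le_of_eq ?_))
    rw [show 2 * t + 4 = t + (t + 1) + 3 by ring, pow_add, pow_add, one_div_pow (2 : ℝ) t]
    field_simp
    norm_num
  have m₃ : ∀ c ∈ univ \ Fat, mean V (outcomes t) (law t) (f₃ c) ≤ (1 / 8) / 2 ^ t := by
    intro c hc
    have hc' : expHeavy t h (a c) < fatBound t := by simpa [hFat] using hc
    have h0 := mean_pow_le (V := V) (outcomes t) (law t) (fun ω _ => law_nonneg t ω) (law_sum t)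
      (fun v ω => a c v < 2 * (ω.1 + 1) * h v) 2 (by norm_num)
    have e : ∑ v, ∑ ω ∈ outcomes t with a c v < 2 * (ω.1 + 1) * h v, law t ω =
        ∑ v, ∑ r ∈ range (t + 1) with a c v < 2 * (r + 1) * h v, geo t r :=
      Finset.sum_congr rfl fun v _ => law_sum_level t (fun r => a c v < 2 * (r + 1) * h v)
    rw [mean_div, div_le_iff₀ (by positivity)]
    refine h0.trans ?_
    rw [e]
    have hle : (2 - 1) * (∑ v, ∑ r ∈ range (t + 1) with a c v < 2 * (r + 1) * h v, geo t r) ≤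
        ((2 * fatBound t + 1 : ℕ) : ℝ) := by
      have := expLoose_le t h (a c) hV
      push_cast
      linarith
    refine (Real.exp_le_exp.2 hle).trans ((exp_nat_le _).trans (le_of_eq ?_))
    rw [coverBound, show 4 * fatBound t + 5 + t = 2 * (2 * fatBound t + 1) + t + 3 by ring,
      pow_add, pow_add]
    field_simp
    norm_num
  have hS' : (S : ℝ) ≤ 2 ^ t := by exact_mod_cast hS
  have bound : ∀ (I : Finset (Fin S)) (f : Fin S → ℝ), (∀ c ∈ I, f c ≤ (1 / 8) / 2 ^ t) →
      ∑ c ∈ I, f c ≤ 1 / 8 := by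
    intro I f hf
    refine (Finset.sum_le_card_nsmul _ _ _ hf).trans ?_
    rw [nsmul_eq_mul]
    have h1 : (#I : ℝ) ≤ 2 ^ t := by
      refine le_trans ?_ hS'
      have := Finset.card_le_univ I
      rw [Fintype.card_fin] at this
      exact_mod_cast this
    rw [mul_div_assoc', div_le_iff₀ (by positivity)]
    linarith
  have htot : mean V (outcomes t) (law t) (fun χ => ∑ b ∈ univ, f₁ b χ +
      (∑ c ∈ Fat, f₂ c χ + ∑ c ∈ univ \ Fat, f₃ c χ)) < 1 := by
    rw [mean_add, mean_add, mean_sum, mean_sum, mean_sum, Fintype.sum_bool]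
    have := m₁ true
    have := m₁ false
    have := bound _ _ m₂
    have := bound _ _ m₃
    linarith
  obtain ⟨χ, hχ, hlt⟩ := exists_of_mean_lt_one _ _ (fun ω _ => law_nonneg t ω) (law_sum t) _ htot
  have p₁ : ∀ b, 0 ≤ f₁ b χ := fun b => by positivity
  have p₂ : ∀ c, 0 ≤ f₂ c χ := fun c =>
    div_nonneg (pow_nonneg (by linarith) _) (by positivity)
  have p₃ : ∀ c, 0 ≤ f₃ c χ := fun c => by positivity
  have s₁ : 0 ≤ ∑ b ∈ univ, f₁ b χ := Finset.sum_nonneg fun b _ => p₁ b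
  have s₂ : 0 ≤ ∑ c ∈ Fat, f₂ c χ := Finset.sum_nonneg fun b _ => p₂ b
  have s₃ : 0 ≤ ∑ c ∈ univ \ Fat, f₃ c χ := Finset.sum_nonneg fun b _ => p₃ b
  refine ⟨fun v => (χ v).1, ({v | (χ v).2 = true} : Finset V), fun v => ?_, fun b => ?_,
    fun c hc => ?_, fun c hc => ?_⟩
  · have := hχ v
    simp only [outcomes, mem_product, mem_range] at this
    exact Nat.lt_succ_iff.1 this.1
  · have h1 := Finset.single_le_sum (f := fun b => f₁ b χ) (fun b _ => p₁ b) (mem_univ b)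
    have h2 : f₁ b χ < 1 := by linarith
    simp only [f₁] at h2
    rw [div_lt_one (by positivity), pow_lt_pow_iff_right₀ (by norm_num)] at h2
    rw [Finset.filter_filter]
    refine le_trans (le_of_eq ?_) h2.le
    congr 1
    ext v
    simp [and_comm]
  · have h1 := Finset.single_le_sum (f := fun c => f₂ c χ) (fun b _ => p₂ b)
      (show c ∈ Fat by simpa [hFat] using hc)
    have h2 : f₂ c χ < 1 := by linarith
    simp only [f₂] at h2
    rw [div_lt_one (by positivity)] at h2
    rw [Finset.filter_filter]
    refine le_trans (le_of_eq ?_) h2.le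
    congr 2
    ext v
    simp [and_comm]
  · have h1 := Finset.single_le_sum (f := fun c => f₃ c χ) (fun b _ => p₃ b)
      (show c ∈ univ \ Fat by simpa [hFat] using hc)
    have h2 : f₃ c χ < 1 := by linarith
    simp only [f₃] at h2
    rw [div_lt_one (by positivity), pow_lt_pow_iff_right₀ (by norm_num)] at h2
    exact h2.le
end Filter

/-! ### The combinatorial core -/

section Core

lemma exists_small_subset {V : Type} (X : Finset V) (z q : ℝ) (K : ℕ) (h1 : z ^ #X ≤ q) (h2 : z ^ K ≤ q) :
    ∃ T ⊆ X, #T ≤ K ∧ z ^ #T ≤ q := by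
  by_cases h : #X ≤ K
  · exact ⟨X, subset_rfl, h, h1⟩
  · obtain ⟨T, hT, hc⟩ := Finset.exists_subset_card_eq (not_le.1 h).le
    exact ⟨T, hT, hc.le, by rwa [hc]⟩

lemma coverBound_pow (t : ℕ) :
    (1 - 1 / (2 * (t : ℝ) + 1)) ^ coverBound t ≤ (1 / 2) ^ (t + 1) := by
  have ht : (0 : ℝ) ≤ t := Nat.cast_nonneg t
  have h0 : 0 ≤ 1 - 1 / (2 * (t : ℝ) + 1) := by
    rw [sub_nonneg, div_le_one (by positivity)]; linarith
  have hK : (2 * t + 1) * (t + 1) ≤ coverBound t := by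
    unfold coverBound fatBound
    nlinarith [Nat.zero_le t, Nat.zero_le (t * t), Nat.zero_le (t * t * t)]
  refine (pow_le_pow_left₀ h0 (Real.one_sub_le_exp_neg _) _).trans ?_
  rw [← Real.exp_nat_mul]
  refine le_trans (Real.exp_le_exp.2 ?_) (exp_neg_nat_le (t + 1))
  have hK' : (2 * (t : ℝ) + 1) * (t + 1) ≤ coverBound t := by exact_mod_cast hK
  rw [mul_neg, neg_le_neg_iff, mul_one_div, le_div_iff₀ (by positivity)]
  push_cast
  linarith

variable {V : Type} [Fintype V] [DecidableEq V]

/-- A derivation of at most `2 ^ t` clauses cannot exist on a bipartite graph with at most `2 ^ t`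
vertices and at least `4 (t + 1) (6 coverBound t + 7)` vertices on each side. For a thin clause, `T c`
consists of the vertices that are heavy or close to heavy; for a fat one, of sampled heavy vertices. The
degree bound is `D v = (2 r v + 1) h v` on sampled vertices. It lies halfway between the free degrees
`≤ 2 r v h v` of heavy vertices, so that each of them shrinks the box of a fat clause by the factor
`1 - 1 / (2 t + 1)`, and the free degrees `≥ 2 (r v + 1) h v` of the vertices outside `T c` for thin `c`,
which the adversary needs. -/
theorem core_false (side : V → Bool) (S t n : ℕ) (E : Fin S → V → V → Prop)
    (hder : MatchingDerivation side S E) (root : Fin S) (hroot : ∀ v u, ¬ E root v u)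
    (hS : S ≤ 2 ^ t) (hV : Fintype.card V ≤ 2 ^ t) (hn : ∀ b, n ≤ #{v | side v = b})
    (hlarge : 4 * (t + 1) * (6 * coverBound t + 7) ≤ n) : False := by
  classical
  set K := coverBound t with hK
  let lb : Bool → ℕ := fun b => #{v | side v = b} / (4 * (t + 1))
  have hlb : ∀ b, 6 * K + 7 ≤ lb b := fun b => by
    rw [Nat.le_div_iff_mul_le (by positivity), mul_comm]
    exact hlarge.trans (hn b)
  let l : V → ℕ := fun v => lb (!side v)
  let h : V → ℕ := fun v => 2 * l v
  have hlv : ∀ v, 6 * K + 7 ≤ l v := fun v => hlb _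
  let a : Fin S → V → ℕ := fun c v => #(freeNbrs side (E c) v)
  obtain ⟨r, L, hr, hL, hfat, hthin⟩ := filter_lemma side S t hS hV h a lb
    (fun b => by have := hlb b; omega)
    (fun b => Nat.lt_mul_div_succ _ (by positivity))
  set z : ℝ := 1 - 1 / (2 * (t : ℝ) + 1) with hz
  have hz0 : 0 ≤ z := by
    have ht : (0 : ℝ) ≤ t := Nat.cast_nonneg t
    rw [hz, sub_nonneg, div_le_one (by positivity)]; linarith
  let Fat : Fin S → Prop := fun c => (fatBound t : ℝ) ≤ expHeavy t h (a c)
  -- in the fat case the set is truncated to at most `K` vertices, which still give the factor needed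
  have hT : ∀ c, ∃ T : Finset V, #T ≤ K ∧
      (Fat c → (∀ v ∈ T, v ∈ L ∧ a c v ≤ 2 * r v * h v) ∧ z ^ #T ≤ (1 / 2) ^ (t + 1)) ∧
      (¬ Fat c → T = ({v | a c v < 2 * (r v + 1) * h v} : Finset V)) := by
    intro c
    by_cases hc : Fat c
    · obtain ⟨T, hTs, hTK, hTz⟩ := exists_small_subset _ z _ K (hfat c hc) (coverBound_pow t)
      exact ⟨T, hTK, fun _ => ⟨fun v hv => by simpa using hTs hv, hTz⟩, fun h => absurd hc h⟩
    · exact ⟨_, hthin c hc, fun h => absurd h hc, fun _ => rfl⟩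
  choose T hTK hTfat hTthin using hT
  let D : V → ℕ := fun v => if v ∈ L then (2 * r v + 1) * h v else 1
  have hh : ∀ v, 0 < h v := fun v => by have := hlv v; simp only [h]; omega
  have hD : ∀ v, 0 < D v := fun v => by
    simp only [D]
    split_ifs
    · exact Nat.mul_pos (by omega) (hh v)
    · omega
  have hDle : ∀ v, D v ≤ (2 * r v + 1) * h v := fun v => by
    simp only [D]
    split_ifs
    · exact le_rfl
    · exact Nat.mul_pos (by omega) (hh v)
  obtain ⟨emb, hemb⟩ : ∃ emb : V → ℚ, Function.Injective emb :=
    ⟨fun v => ((Fintype.equivFin V v : ℕ) : ℚ), fun v w hvw => by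
      exact (Fintype.equivFin V).injective (Fin.ext (Nat.cast_injective hvw))⟩
  obtain ⟨g, hg, hgv⟩ := exists_gridPoly_boxes D ({c | Fat c} : Finset (Fin S)) T
    (fun c v => (freeNbrs side (E c) v).image emb) (by
      have hDp : (0 : ℝ) < ∏ v, (D v : ℝ) := Finset.prod_pos fun v _ => by exact_mod_cast hD v
      have hone : ∀ c ∈ ({c | Fat c} : Finset (Fin S)),
          ((∏ v, if v ∈ T c then #((freeNbrs side (E c) v).image emb) else D v : ℕ) : ℝ) ≤
            (1 / 2) ^ (t + 1) * ∏ v, (D v : ℝ) := by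
        intro c hc
        obtain ⟨hc1, hc2⟩ := hTfat c (by simpa using hc)
        have e : z ^ #(T c) * ∏ v, (D v : ℝ) = ∏ v, (if v ∈ T c then z else 1) * (D v : ℝ) := by
          rw [Finset.prod_mul_distrib, Finset.prod_ite_mem]
          simp
        refine le_trans ?_ (mul_le_mul_of_nonneg_right hc2 hDp.le)
        rw [e, Nat.cast_prod]
        refine Finset.prod_le_prod (fun v _ => Nat.cast_nonneg _) fun v _ => ?_
        by_cases hv : v ∈ T c
        · obtain ⟨hvL, hva⟩ := hc1 v hv
          simp only [hv, if_true]
          rw [Finset.card_image_of_injective _ hemb]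
          have h1 : (#(freeNbrs side (E c) v) : ℝ) ≤ 2 * r v * h v := by exact_mod_cast hva
          have h2 : (D v : ℝ) = (2 * r v + 1) * h v := by simp [D, hvL]
          have h3 : (2 * r v : ℝ) ≤ z * (2 * r v + 1) := by
            have hrt : (r v : ℝ) ≤ t := by exact_mod_cast hr v
            have : (2 * (r v : ℝ) + 1) / (2 * t + 1) ≤ 1 := by
              rw [div_le_one (by positivity)]; linarith
            have e2 : z * (2 * r v + 1) = 2 * r v + 1 - (2 * (r v : ℝ) + 1) / (2 * t + 1) := by
              rw [hz]; ring
            linarith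
          rw [h2, ← mul_assoc]
          exact h1.trans (mul_le_mul_of_nonneg_right h3 (Nat.cast_nonneg _))
        · simp [hv]
      have hsum : ((∑ c ∈ ({c | Fat c} : Finset (Fin S)),
          ∏ v, (if v ∈ T c then #((freeNbrs side (E c) v).image emb) else D v) : ℕ) : ℝ) <
            ((∏ v, D v : ℕ) : ℝ) := by
        have e3 : ((∏ v, D v : ℕ) : ℝ) = ∏ v, (D v : ℝ) := Nat.cast_prod _ _
        rw [Nat.cast_sum, e3]
        refine lt_of_le_of_lt (Finset.sum_le_card_nsmul _ _ _ hone) ?_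
        rw [nsmul_eq_mul, ← mul_assoc]
        refine mul_lt_of_lt_one_left hDp ?_
        have h1 : (#({c | Fat c} : Finset (Fin S)) : ℝ) ≤ 2 ^ t := by
          have := (Finset.card_le_univ ({c | Fat c} : Finset (Fin S))).trans
            ((Fintype.card_fin S).le.trans hS)
          exact_mod_cast this
        rw [one_div_pow, mul_one_div, div_lt_one (by positivity), pow_succ]
        have : (0 : ℝ) < 2 ^ t := by positivity
        linarith
      exact_mod_cast hsum)
  have hfreeroot : ∀ v, 2 * (t + 1) * h v ≤ a root v := by
    intro v
    have e : freeNbrs side (E root) v = ({u | side u = !side v} : Finset V) := by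
      ext u
      simp only [freeNbrs, hroot, not_false_eq_true, and_true, mem_filter, mem_univ, true_and]
      cases side u <;> cases side v <;> simp
    simp only [a, e, h, l, lb]
    have := Nat.div_mul_le_self #({u | side u = !side v} : Finset V) (4 * (t + 1))
    calc _ = #({u | side u = !side v} : Finset V) / (4 * (t + 1)) * (4 * (t + 1)) := by ring
      _ ≤ _ := this
  -- the empty clause has no heavy vertex, whatever the thresholds
  have hrootthin : ¬ Fat root := by
    have e : expHeavy t h (a root) = 0 := by
      unfold expHeavy
      refine Finset.sum_eq_zero fun v _ => Finset.sum_eq_zero fun k hk => ?_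
      rw [mem_filter, mem_range] at hk
      have h1 := hfreeroot v
      have h2 : k * h v ≤ t * h v := Nat.mul_le_mul_right _ (by omega)
      have h3 := hh v
      exfalso
      nlinarith [hk.2]
    simp only [Fat, e, not_le]
    have : 0 < fatBound t := by unfold fatBound; positivity
    exact_mod_cast this
  refine game_false side S E hder root hroot D hD g hg emb hemb L l (fun v => ?_) T K hTK ?_ Fat
    (fun c hc v hv => ?_) fun c hc => ⟨fun v hv => ((hTfat c hc).1 v hv).1, ?_⟩
  · refine le_trans (le_of_eq ?_) (hL (!side v))
    congr 1
    ext u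
    simp only [mem_filter]
    cases side u <;> cases side v <;> simp
  · rw [hTthin root hrootthin, Finset.filter_eq_empty_iff]
    intro v _
    rw [not_lt]
    refine le_trans ?_ (hfreeroot v)
    exact Nat.mul_le_mul_right _ (by have := hr v; omega)
  · rw [hTthin c hc] at hv
    simp only [mem_filter, mem_univ, true_and, not_lt] at hv
    refine le_trans ?_ hv
    have h1 := hDle v
    have h2 := hlv v
    have e : 2 * (r v + 1) * h v = (2 * r v + 1) * h v + 2 * l v := by simp only [h]; ring
    omega
  · exact hgv c (by simpa using hc)
end Core

/-! ### From resolution refutations to matchings -/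

section Translation

/-- Matching pigeon `i` to hole `j` satisfies `C`: this sets `x_{i,j}` to true and every other
variable of row `i` or column `j` to false. -/
def EdgeSat (C : Clause (ℕ × ℕ)) (i j : ℕ) : Prop :=
  ((i, j), true) ∈ C ∨
    ∃ e : ℕ × ℕ, (e, false) ∈ C ∧ e ≠ (i, j) ∧ (e.1 = i ∨ e.2 = j)

variable {A B : Finset ℕ}

/-- `EdgeSat` as a symmetric relation on the disjoint union of the pigeons `A` and the holes `B`. -/
def EdgeRel (A B : Finset ℕ) (C : Clause (ℕ × ℕ)) : A ⊕ B → A ⊕ B → Prop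
  | .inl i, .inr j => EdgeSat C i j
  | .inr j, .inl i => EdgeSat C i j
  | .inl _, .inl _ => False
  | .inr _, .inr _ => False

lemma EdgeRel.symm (C : Clause (ℕ × ℕ)) (v u : A ⊕ B) (h : EdgeRel A B C v u) :
    EdgeRel A B C u v := by
  rcases v with v | v <;> rcases u with u | u <;> exact h

lemma avoids_edgeRel_iff (C : Clause (ℕ × ℕ)) (φ : A ⊕ B → A ⊕ B)
    (hφ : IsMatching Sum.isLeft φ) : Avoids φ (EdgeRel A B C) ↔
      ∀ (i : A) (j : B), φ (.inl i) = .inr j → ¬ EdgeSat C i j := by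
  constructor
  · intro h i j hij hs
    refine h (.inl i) (by rw [hij]; simp) ?_
    rw [hij]
    exact hs
  · rintro h (i | j) hne hE
    · rcases hw : φ (.inl i) with i' | j'
      · rw [hw] at hE; exact hE
      · rw [hw] at hE; exact h i j' hw hE
    · rcases hw : φ (.inr j) with i' | j'
      · rw [hw] at hE
        refine h i' j ?_ hE
        rw [← hw, (hφ _).1]
      · rw [hw] at hE; exact hE

lemma edgeSat_of_resolvent_left {Ca Cb C : Clause (ℕ × ℕ)} {x : ℕ × ℕ}
    (hC : C = Ca.erase (x, true) ∪ Cb.erase (x, false)) {i j : ℕ} (h : EdgeSat Ca i j)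
    (hx : x ≠ (i, j)) : EdgeSat C i j := by
  subst hC
  rcases h with h | ⟨e, he, h1, h2⟩
  · exact Or.inl (by simp [h, hx.symm])
  · exact Or.inr ⟨e, by simp [he], h1, h2⟩

lemma edgeSat_of_resolvent_right {Ca Cb C : Clause (ℕ × ℕ)} {x : ℕ × ℕ}
    (hC : C = Ca.erase (x, true) ∪ Cb.erase (x, false)) {i j : ℕ} (h : EdgeSat Cb i j)
    (hx : x ≠ (i, j) → ¬ (x.1 = i ∨ x.2 = j)) : EdgeSat C i j := by
  subst hC
  rcases h with h | ⟨e, he, h1, h2⟩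
  · exact Or.inl (by simp [h])
  · refine Or.inr ⟨e, ?_, h1, h2⟩
    have : e ≠ x := by rintro rfl; exact hx h1 h2
    simp [he, this]

/-- If a matching satisfies no literal of the resolvent, it satisfies no literal of one of the premises:
the premise with `¬x` if `x` is an edge of the matching, and the premise with `x` otherwise. -/
lemma resolution_step {Ca Cb C : Clause (ℕ × ℕ)} {x : ℕ × ℕ}
    (hC : C = Ca.erase (x, true) ∪ Cb.erase (x, false))
    (φ : A ⊕ B → A ⊕ B) (hφ : IsMatching Sum.isLeft φ) (h : Avoids φ (EdgeRel A B C)) :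
    Avoids φ (EdgeRel A B Ca) ∨ Avoids φ (EdgeRel A B Cb) := by
  simp only [avoids_edgeRel_iff _ φ hφ] at h ⊢
  by_cases hx : ∃ (i : A) (j : B), φ (.inl i) = .inr j ∧ x = (↑i, ↑j)
  · right
    obtain ⟨i₀, j₀, h0, rfl⟩ := hx
    intro i j hij hs
    refine h i j hij (edgeSat_of_resolvent_right hC hs ?_)
    rintro hne (he | he)
    · obtain rfl : i₀ = i := Subtype.ext he
      rw [h0] at hij
      exact hne (by rw [Sum.inr.inj hij])
    · obtain rfl : j₀ = j := Subtype.ext he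
      have : (Sum.inl i₀ : A ⊕ B) = .inl i := by
        rw [← (hφ (.inl i₀)).1, h0, ← hij, (hφ _).1]
      exact hne (by rw [Sum.inl.inj this])
  · left
    intro i j hij hs
    exact h i j hij (edgeSat_of_resolvent_left hC hs fun hxe => hx ⟨i, j, hij, hxe⟩)

/-- Every clause of the formula has a vertex all of whose edges satisfy it: the pigeon for a pigeon
clause, a hole for each of the other three kinds. The pigeon must belong to `A`. -/
lemma initial_clause_saturated {m n : ℕ} (hA : A ⊆ Icc 1 m) {C : Clause (ℕ × ℕ)}
    (hC : C ∈ FOWPHPneg m n)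
    (hp : ∀ i ∈ Icc 1 m, C = pigeonClause n i → i ∈ A) :
    ∃ v : A ⊕ (Icc 1 n : Finset ℕ), ∀ u, Sum.isLeft u ≠ Sum.isLeft v →
      EdgeRel A (Icc 1 n) C v u := by
  simp only [FOWPHPneg, FWPHPneg, WPHPneg, mem_union, mem_image, mem_filter, mem_product] at hC
  rcases hC with (((⟨i, hi, rfl⟩ | ⟨t, ⟨⟨-, -, hj⟩, hlt⟩, rfl⟩) | ⟨t, ⟨⟨-, hj, -⟩, hlt⟩, rfl⟩) |
    ⟨j, hj, rfl⟩)
  · refine ⟨.inl ⟨i, hp i hi rfl⟩, ?_⟩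
    rintro (u | ⟨j, hj⟩) hu
    · simp at hu
    · left; simpa [pigeonClause] using hj
  · refine ⟨.inr ⟨t.2.2, hj⟩, ?_⟩
    rintro (⟨i, hi⟩ | u) hu
    · right
      by_cases h : i = t.1
      · exact ⟨(t.2.1, t.2.2), by simp [holeClause],
          fun he => hlt.ne' ((congrArg Prod.fst he).trans h), Or.inr rfl⟩
      · exact ⟨(t.1, t.2.2), by simp [holeClause], by simp [Ne.symm h], Or.inr rfl⟩
    · simp at hu
  · refine ⟨.inr ⟨t.2.1, hj⟩, ?_⟩
    rintro (⟨i, hi⟩ | u) hu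
    · right
      by_cases h : i = t.1
      · exact ⟨(t.1, t.2.2), by simp [funcClause], by simp [h, hlt.ne'], Or.inl h.symm⟩
      · exact ⟨(t.1, t.2.1), by simp [funcClause], by simp [Ne.symm h], Or.inr rfl⟩
    · simp at hu
  · refine ⟨.inr ⟨j, hj⟩, ?_⟩
    rintro (⟨i, hi⟩ | u) hu
    · left; simpa [ontoClause] using hA hi
    · simp at hu

/-- A refutation of length about `2 ^ t` forces `n` to be polynomial in `t`, whatever the number of
pigeons: only the at most `P.size` pigeons whose clauses are used matter, padded to at least `n`. -/
theorem size_lower_bound {m n t : ℕ} (hmn : n + 1 ≤ m) (P : ResolutionProof (FOWPHPneg m n))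
    (ht : P.size + 2 * n ≤ 2 ^ t) : n < 4 * (t + 1) * (6 * coverBound t + 7) := by
  by_contra! hlarge
  -- the pigeons whose pigeon clauses occur in the refutation
  let U : Finset ℕ := {i ∈ Icc 1 m | ∃ u, P.clause u = pigeonClause n i}
  obtain ⟨k, hk⟩ : ∃ k, k ∈ Icc 1 n := by
    have : 0 < 4 * (t + 1) * (6 * coverBound t + 7) := by positivity
    exact ⟨1, mem_Icc.2 ⟨le_rfl, by omega⟩⟩
  have hUcard : #U ≤ P.size := by
    have hch : ∀ i ∈ U, ∃ u, P.clause u = pigeonClause n i := fun i hi => (mem_filter.1 hi).2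
    have : Nonempty (Fin P.size) := ⟨P.root⟩
    choose! f hf using hch
    have := Finset.card_le_card_of_injOn (s := U) (t := (univ : Finset (Fin P.size))) f
      (fun _ _ => by simp) (by
        intro i hi i' hi' hii
        have h1 : pigeonClause n i = pigeonClause n i' := by rw [← hf i hi, ← hf i' hi', hii]
        have h2 : ((i, k), true) ∈ pigeonClause n i' := by
          rw [← h1]; simpa [pigeonClause] using hk
        simp only [pigeonClause, mem_image, Prod.mk.injEq] at h2
        obtain ⟨_, _, ⟨h3, _⟩, _⟩ := h2
        exact h3.symm)
    simpa using this
  obtain ⟨A, hUA, hAm, hAcard⟩ := Finset.exists_subsuperset_card_eq (s := U) (t := Icc 1 m)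
    (n := max #U n) (Finset.filter_subset _ _) (le_max_left _ _) (by
      have hU : #U ≤ #(Icc 1 m) := Finset.card_le_card (Finset.filter_subset _ _)
      rw [Nat.card_Icc] at hU ⊢
      exact max_le hU (by omega))
  refine core_false (V := A ⊕ (Icc 1 n : Finset ℕ)) Sum.isLeft P.size t n
    (fun c => EdgeRel A (Icc 1 n) (P.clause c)) ⟨fun c => EdgeRel.symm _, fun c => ?_⟩ P.root
    ?_ (by omega) ?_ ?_ hlarge
  · rcases hs : P.step c with _ | ⟨x, a, b⟩
    · left
      exact initial_clause_saturated hAm (ResolutionProof.step_axiom P c hs) fun i hi hc =>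
        hUA (mem_filter.2 ⟨hi, c, hc⟩)
    · right
      exact ⟨a, b, (P.step_lt c x a b hs).1, (P.step_lt c x a b hs).2,
        resolution_step (P.step_res c x a b hs).2.2⟩
  · have : P.clause P.root = ∅ := P.last_empty
    rw [this]
    rintro (v | v) (u | u) <;> simp [EdgeRel, EdgeSat]
  · simp only [Fintype.card_sum, Fintype.card_coe, Nat.card_Icc]
    omega
  · have e1 : #{v : A ⊕ (Icc 1 n : Finset ℕ) | v.isLeft = true} = #A := by
      rw [Finset.card_filter, Fintype.sum_sum_type]; simp
    have e2 : #{v : A ⊕ (Icc 1 n : Finset ℕ) | v.isLeft = false} = n := by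
      rw [Finset.card_filter, Fintype.sum_sum_type]; simp
    rintro (_ | _)
    · rw [e2]
    · rw [e1, hAcard]; exact le_max_right _ _
end Translation

/-! ### Asymptotics -/

section Asymptotics
open Filter

lemma large_bound (t : ℕ) :
    4 * (t + 1) * (6 * coverBound t + 7) ≤ 25000 * (t + 1) ^ 4 := by
  have h1 : fatBound t ≤ 256 * (t + 1) ^ 3 := by
    unfold fatBound
    calc 32 * (t + 1) * (2 * t + 1) * (2 * t + 4)
        ≤ 32 * (t + 1) * (2 * (t + 1)) * (4 * (t + 1)) := by gcongr <;> omega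
      _ = _ := by ring
  have h2 : t + 1 ≤ (t + 1) ^ 3 := Nat.le_self_pow (by norm_num) _
  have h3 : 6 * coverBound t + 7 ≤ 6250 * (t + 1) ^ 3 := by
    unfold coverBound
    omega
  calc 4 * (t + 1) * (6 * coverBound t + 7) ≤ 4 * (t + 1) * (6250 * (t + 1) ^ 3) := by gcongr
    _ = _ := by ring

lemma eventually_bounds : ∀ᶠ x : ℝ in atTop,
    2 * x ^ 8 ≤ (2 : ℝ) ^ x ∧ 25000 * (x + 3) ^ 4 ≤ x ^ 8 := by
  have h1 : ∀ᶠ x : ℝ in atTop, 2 * x ^ 8 ≤ (2 : ℝ) ^ x := by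
    have := (isLittleO_pow_exp_pos_mul_atTop 8 (Real.log_pos one_lt_two)).bound
      (show (0 : ℝ) < 1 / 2 by norm_num)
    filter_upwards [this, eventually_ge_atTop 0] with x hx hx0
    rw [Real.norm_of_nonneg (by positivity), Real.norm_of_nonneg (Real.exp_pos _).le] at hx
    rw [Real.rpow_def_of_pos two_pos]
    linarith
  filter_upwards [h1, eventually_ge_atTop 1000] with x hx hx0
  refine ⟨hx, ?_⟩
  have h2 : (x + 3) ^ 4 ≤ (2 * x) ^ 4 := by gcongr; linarith
  have h3 : (400000 : ℝ) ≤ x ^ 4 :=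
    le_trans (by norm_num) (pow_le_pow_left₀ (by norm_num) hx0 4)
  have h4 : 0 ≤ x ^ 4 := by positivity
  nlinarith

end Asymptotics

/-- Razborov: there are constants `ε > 0` and `c > 0` such that
for every `n ≥ 1` and every `m ≥ n+1`, every Resolution refutation of the weak
functional onto pigeonhole principle CNF `¬FOWPHP^m_n` has length at least
`c · 2^{n^ε}`. -/
theorem razborov_functional_onto_wphp_lower_bound :
    ∃ ε c : ℝ, 0 < ε ∧ 0 < c ∧ ∀ n : ℕ, 1 ≤ n → ∀ m : ℕ, n + 1 ≤ m →
      ∀ P : ResolutionProof (FOWPHPneg m n),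
        c * (2 : ℝ) ^ ((n : ℝ) ^ ε) ≤ (P.size : ℝ) := by
  have hev : ∀ᶠ n : ℕ in Filter.atTop, 2 * (((n : ℝ) ^ (1 / 8 : ℝ)) ^ 8) ≤
      (2 : ℝ) ^ ((n : ℝ) ^ (1 / 8 : ℝ)) ∧
      25000 * ((n : ℝ) ^ (1 / 8 : ℝ) + 3) ^ 4 ≤ ((n : ℝ) ^ (1 / 8 : ℝ)) ^ 8 :=
    ((tendsto_rpow_atTop (by norm_num)).comp tendsto_natCast_atTop_atTop).eventually
      eventually_bounds
  obtain ⟨n₀, hn₀⟩ := Filter.eventually_atTop.1 hev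
  refine ⟨1 / 8, (1 / 2) ^ n₀, by norm_num, by positivity, fun n hn m hm P => ?_⟩
  -- below `n₀` the constant `c` makes the bound at most `1`
  by_cases hlt : n₀ ≤ n
  · obtain ⟨h1, h2⟩ := hn₀ n hlt
    set x : ℝ := (n : ℝ) ^ (1 / 8 : ℝ) with hx
    have hx0 : 0 ≤ x := by positivity
    have hx8 : x ^ 8 = n := by
      rw [hx, ← Real.rpow_natCast, ← Real.rpow_mul (Nat.cast_nonneg n)]
      norm_num
    rw [hx8] at h1 h2
    have hc : (1 / 2 : ℝ) ^ n₀ ≤ 1 := pow_le_one₀ (by norm_num) (by norm_num)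
    by_contra! hsize
    have hsize' : (P.size : ℝ) ≤ 2 ^ x :=
      hsize.le.trans (mul_le_of_le_one_left (by positivity) hc)
    have hceil : (2 : ℝ) ^ x ≤ 2 ^ ⌈x⌉₊ := by
      rw [← Real.rpow_natCast]
      exact Real.rpow_le_rpow_of_exponent_le (by norm_num) (Nat.le_ceil x)
    -- `t = ⌈x⌉ + 1` with `x = n ^ (1 / 8)`, as both `P.size` and `2 * n` are at most `2 ^ x`
    have ht : P.size + 2 * n ≤ 2 ^ (⌈x⌉₊ + 1) := by
      have : (P.size : ℝ) + 2 * n ≤ 2 ^ (⌈x⌉₊ + 1) := by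
        rw [pow_succ]; linarith
      exact_mod_cast this
    have hb := (size_lower_bound hm P ht).trans_le (large_bound _)
    have hb' : (n : ℝ) < 25000 * ((⌈x⌉₊ : ℝ) + 1 + 1) ^ 4 := by exact_mod_cast hb
    have h3 : (⌈x⌉₊ : ℝ) + 1 + 1 ≤ x + 3 := by
      have := (Nat.ceil_lt_add_one hx0).le
      linarith
    have h4 : ((⌈x⌉₊ : ℝ) + 1 + 1) ^ 4 ≤ (x + 3) ^ 4 := by gcongr
    linarith
  · have h1 : (1 : ℝ) ≤ P.size := by exact_mod_cast P.size_pos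
    have h2 : (n : ℝ) ^ (1 / 8 : ℝ) ≤ n₀ := by
      have hn1 : (1 : ℝ) ≤ n := by exact_mod_cast hn
      refine (Real.rpow_le_rpow_of_exponent_le hn1 (by norm_num : (1 / 8 : ℝ) ≤ 1)).trans ?_
      rw [Real.rpow_one]
      exact_mod_cast (not_le.1 hlt).le
    have h3 : (2 : ℝ) ^ ((n : ℝ) ^ (1 / 8 : ℝ)) ≤ 2 ^ n₀ := by
      rw [← Real.rpow_natCast]
      exact Real.rpow_le_rpow_of_exponent_le (by norm_num) h2
    calc (1 / 2 : ℝ) ^ n₀ * 2 ^ ((n : ℝ) ^ (1 / 8 : ℝ)) ≤ (1 / 2) ^ n₀ * 2 ^ n₀ := by gcongr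
      _ = 1 := by rw [← mul_pow]; norm_num
      _ ≤ _ := h1
end
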